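/- For all integers k ≥ 1, s ≥ 0, r ≥ 0 with s and r both odd and s + r < k, GR_k((k−s−r)P3, sK3, rH3) = 16·5^((s−1)/2)·17^((r−1)/2) + 1. -/

import Mathlib

open SimpleGraph

/-- A rainbow triangle in an edge-coloring of a complete graph: three distinct
vertices whose three pairwise edges receive three pairwise distinct colors. -/
def HasRainbowTriangle {n k : ℕ} (c : Fin n → Fin n → Fin k) : Prop :=
  ∃ u v w : Fin n, u ≠ v ∧ u ≠ w ∧ v ≠ w ∧
    c u v ≠ c u w ∧ c u v ≠ c v w ∧ c u w ≠ c v w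

/-- A Gallai `k`-coloring of `K_n`: a symmetric edge-coloring with no rainbow triangle. -/
def IsGallaiColoring {n k : ℕ} (c : Fin n → Fin n → Fin k) : Prop :=
  (∀ u v, c u v = c v u) ∧ ¬ HasRainbowTriangle c

/-- A monochromatic copy of the graph `F` in color `i`: an injection of the vertices
of `F` into the vertices of `K_n` mapping every edge of `F` to an edge colored `i`. -/
def HasMonoCopy {V : Type} (F : SimpleGraph V) {n k : ℕ}
    (c : Fin n → Fin n → Fin k) (i : Fin k) : Prop :=
  ∃ f : V → Fin n, Function.Injective f ∧ ∀ a b, F.Adj a b → c (f a) (f b) = i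

/-- The Gallai-Ramsey number `GR(F₁, …, F_k)`: the least `n` such that every Gallai
`k`-coloring of `K_n` contains, for some color `i`, a monochromatic copy of `Fᵢ`
in color `i`. -/
noncomputable def GR (k : ℕ) (F : Fin k → Σ V : Type, SimpleGraph V) : ℕ :=
  sInf {n : ℕ | ∀ c : Fin n → Fin n → Fin k, IsGallaiColoring c →
    ∃ i : Fin k, HasMonoCopy (F i).2 c i}

/-- The triangle `K₃`. -/
def GK3 : SimpleGraph (Fin 3) := ⊤

/-- The path `P₃` on three vertices (edges 0–1 and 1–2). -/
def GP3 : SimpleGraph (Fin 3) := SimpleGraph.fromRel (fun a _ => a = 1)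

/-- `H₁`: a `K₄` on `{0,1,2,3}` together with the extra vertex `4` adjacent to
exactly the vertex `3`. -/
def GH1 : SimpleGraph (Fin 5) :=
  SimpleGraph.fromRel (fun a b => (a ≠ 4 ∧ b ≠ 4) ∨ (a = 3 ∧ b = 4))

/-- `H₂`: `K₅` minus the two edges 0–1 and 1–2 of a path on three vertices. -/
def GH2 : SimpleGraph (Fin 5) :=
  (⊤ : SimpleGraph (Fin 5)) \
    SimpleGraph.fromRel (fun a b => (a = 0 ∧ b = 1) ∨ (a = 1 ∧ b = 2))

/-- `H₃`: `K₅` minus the edge 0–1. -/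
def GH3 : SimpleGraph (Fin 5) :=
  (⊤ : SimpleGraph (Fin 5)) \ SimpleGraph.fromRel (fun a b => a = 0 ∧ b = 1)
/-- The family of graphs for `GR_k((k-s-r)P₃, sK₃, rH₃)`: the graph `H₃` in each of
the first `r` colors, the triangle `K₃` in each of the next `s` colors, and the path
`P₃` in each of the remaining `k - s - r` colors. -/
def mixPKH (k s r : ℕ) : Fin k → Σ V : Type, SimpleGraph V :=
  fun i =>
    if (i : ℕ) < r then ⟨Fin 5, GH3⟩
    else if (i : ℕ) < r + s then ⟨Fin 3, GK3⟩
    else ⟨Fin 3, GP3⟩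

/-!
For the upper bound, give colour `p` a *level* `l p`: 3 for `H₃`, 2 for `K₃` and 1 for `P₃`. A
monochromatic clique with `l p + 1` vertices is the largest that colour `p` permits. A vertex has
weight 1 if it lies in such a clique and weight 2 otherwise, and by induction the total weight is at
most `2 * cap / 5`, where `cap` depends only on the numbers of colours of levels 2 and 3. An edge of
a colour of level 1 joins two twins, one of which can be deleted without losing weight. Otherwise
Gallai's theorem partitions the vertices into modules joined in two colours `i` and `j`. For a
vertex `v`, its module and its neighbours outside it in colour `i` are completely joined in colour
`i`, so passing to either set lowers the level of `i`, depending on the cliques in the other. When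
no module contains an edge of a critical colour, one vertex of each module is kept instead, and
the problem becomes one about two-coloured complete graphs, where weights 10, 16 and 34 suffice for
the levels (2, 2), (3, 2) and (3, 3).

For the lower bound, lexicographic products of the pentagon, of a circulant graph on 8 vertices and
of the Paley graph on 17 vertices use up all colours of levels 2 and 3, and one further colour
doubles the number of vertices by a perfect matching.
-/

namespace GallaiRamsey

open Finset

section UpperBound

open scoped Classical

section NearCliqueFree

variable {V : Type*} {G : SimpleGraph V} {X S T A B : Finset V} {m m' m'' a : ℕ} {u v : V}

/-- `G` has no `K_{m+2}` minus an edge inside `X`: an `m`-clique has at most one common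
neighbour. For `m = 1` and `m = 3` this forbids `P₃` and `H₃`; for `m = 2` it is weaker than
having no `K₃`, since triangles that share no edge are allowed. -/
def NearCliqueFreeOn (G : SimpleGraph V) (X : Finset V) (m : ℕ) : Prop :=
  ∀ Q ⊆ X, G.IsNClique m Q → ∀ u ∈ X, ∀ v ∈ X, (∀ q ∈ Q, G.Adj u q) → (∀ q ∈ Q, G.Adj v q) → u = v

/-- The vertex `v` lies in an `m`-clique of `G` contained in `X`. -/
def MemCliqueOn (G : SimpleGraph V) (X : Finset V) (m : ℕ) (v : V) : Prop :=
  ∃ Q ⊆ X, G.IsNClique m Q ∧ v ∈ Q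

/-- Passing from `X` to `S` changes the level of `G` from `m` to `m'`: on `S` the constraint of
level `m'` holds, and a vertex of a largest clique permitted on `S` already lies in a largest
clique permitted on `X`. -/
structure Reduces (G : SimpleGraph V) (X : Finset V) (m : ℕ) (S : Finset V) (m' : ℕ) : Prop where
  nearCliqueFreeOn : NearCliqueFreeOn G S m'
  memCliqueOn : ∀ v, MemCliqueOn G S (m' + 1) v → MemCliqueOn G X (m + 1) v

lemma NearCliqueFreeOn.mono (h : NearCliqueFreeOn G X m) (hS : S ⊆ X) : NearCliqueFreeOn G S m :=
  fun Q hQ hc u hu v hv => h Q (hQ.trans hS) hc u (hS hu) v (hS hv)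

lemma NearCliqueFreeOn.reduces (h : NearCliqueFreeOn G X m) (hS : S ⊆ X) : Reduces G X m S m :=
  ⟨h.mono hS, fun _ ⟨Q, hQ, hv⟩ => ⟨Q, hQ.trans hS, hv⟩⟩

lemma memCliqueOn_two (hu : u ∈ X) (hv : v ∈ X) (h : G.Adj u v) : MemCliqueOn G X 2 u :=
  ⟨{u, v}, by simp [insert_subset_iff, hu, hv], by
    simpa [isNClique_iff, h] using card_pair h.ne, by simp⟩

lemma exists_isNClique_of_not_cliqueFreeOn (h : ¬ G.CliqueFreeOn (A : Set V) a) :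
    ∃ Q ⊆ A, G.IsNClique a Q := by
  simpa [CliqueFreeOn] using h

lemma not_cliqueFreeOn_one (h : A.Nonempty) : ¬ G.CliqueFreeOn (A : Set V) 1 := by
  obtain ⟨x, hx⟩ := h
  exact fun hfree => hfree (t := {x}) (by simpa using hx) (by simp)

lemma isNClique_union {Q R : Finset V} {b : ℕ} (hQ : G.IsNClique a Q) (hR : G.IsNClique b R)
    (h : ∀ q ∈ Q, ∀ r ∈ R, G.Adj q r) : G.IsNClique (a + b) (Q ∪ R) := by
  refine ⟨?_, ?_⟩
  · have := G.symm
    rw [coe_union, IsClique, Set.pairwise_union_of_symm]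
    exact ⟨hQ.1, hR.1, fun q hq r hr _ => h q hq r hr⟩
  · have hdisj : Disjoint Q R := disjoint_left.2 fun x hxQ hxR => (h x hxQ x hxR).ne rfl
    rw [card_union_of_disjoint hdisj, hQ.2, hR.2]

namespace Reduces

lemma trans (h : Reduces G X m S m') (h' : Reduces G S m' T m'') : Reduces G X m T m'' :=
  ⟨h'.nearCliqueFreeOn, fun v hv => h.memCliqueOn v (h'.memCliqueOn v hv)⟩

lemma of_cliqueFreeOn (h : G.CliqueFreeOn (S : Set V) (m' + 1)) : Reduces G X m S m' where
  nearCliqueFreeOn _ hQ hc _ hu _ _ hadj _ :=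
    (h (mod_cast insert_subset hu hQ) (hc.insert hadj)).elim
  memCliqueOn := fun _ ⟨_, hQ, hc, _⟩ => (h (mod_cast hQ) hc).elim

lemma of_join {b : ℕ} (hX : NearCliqueFreeOn G X (a + b)) (hA : A ⊆ X) (hB : B ⊆ X)
    (hAB : ∀ x ∈ A, ∀ y ∈ B, G.Adj x y) (hclique : ¬ G.CliqueFreeOn (A : Set V) a) :
    Reduces G X (a + b) B b := by
  obtain ⟨R, hRA, hR⟩ := exists_isNClique_of_not_cliqueFreeOn hclique
  refine ⟨fun Q hQB hQ u hu v hv hu' hv' => ?_, fun v ⟨Q, hQB, hQ, hv⟩ => ?_⟩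
  · refine hX (R ∪ Q) (union_subset (hRA.trans hA) (hQB.trans hB))
      (isNClique_union hR hQ fun r hr q hq => hAB r (hRA hr) q (hQB hq)) u (hB hu) v (hB hv) ?_ ?_
    · exact fun q hq => (mem_union.1 hq).elim (fun h => (hAB q (hRA h) u hu).symm) (hu' q)
    · exact fun q hq => (mem_union.1 hq).elim (fun h => (hAB q (hRA h) v hv).symm) (hv' q)
  · exact ⟨R ∪ Q, union_subset (hRA.trans hA) (hQB.trans hB),
      by simpa only [add_assoc] using
        isNClique_union hR hQ fun r hr q hq => hAB r (hRA hr) q (hQB hq), mem_union_right _ hv⟩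

end Reduces
end NearCliqueFree

/-- A colouring of the edges of the complete graph on `V` by `K` without rainbow triangles. The
colour assigned to a pair `(v, v)` is irrelevant. -/
structure GallaiColoring (V K : Type*) where
  color : V → V → K
  symm : ∀ u v, color u v = color v u
  not_rainbow : ∀ ⦃u v w⦄, u ≠ v → u ≠ w → v ≠ w →
    color u v = color u w ∨ color u v = color v w ∨ color u w = color v w

namespace GallaiColoring

instance {V K : Type*} : CoeFun (GallaiColoring V K) (fun _ => V → V → K) := ⟨color⟩

variable {V K : Type*} (C : GallaiColoring V K) (X S : Finset V) (l l' : K → ℕ)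

/-- The graph of the edges of colour `p`. -/
def graph (p : K) : SimpleGraph V where
  Adj u v := u ≠ v ∧ C u v = p
  symm := ⟨fun u v h => ⟨h.1.symm, C.symm v u ▸ h.2⟩⟩
  loopless := ⟨fun _ h => h.1 rfl⟩

/-- Every colour `p` satisfies on `X` the clique constraint of its level `l p`. -/
def Admissible : Prop := ∀ p, NearCliqueFreeOn (C.graph p) X (l p)

/-- The vertex `v` lies in a monochromatic clique that is as large as the levels permit. -/
def Saturated (v : V) : Prop := ∃ p, MemCliqueOn (C.graph p) X (l p + 1) v

/-- The weight of a vertex: a saturated vertex counts once, any other vertex counts twice. -/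
noncomputable def weight (v : V) : ℕ := if C.Saturated X l v then 1 else 2

/-- The total weight of `X`, the quantity bounded by the induction. -/
noncomputable def totalWeight : ℕ := ∑ v ∈ X, C.weight X l v

variable {C X S l l'} {u v w : V}

lemma graph_adj {p : K} : (C.graph p).Adj u v ↔ u ≠ v ∧ C u v = p := Iff.rfl

lemma Admissible.mono (h : C.Admissible X l) (hS : S ⊆ X) : C.Admissible S l :=
  fun p => (h p).mono hS

lemma weight_le_two : C.weight X l v ≤ 2 := by unfold weight; split_ifs <;> omega

lemma one_le_weight : 1 ≤ C.weight X l v := by unfold weight; split_ifs <;> omega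

lemma weight_eq_one (h : C.Saturated X l v) : C.weight X l v = 1 := if_pos h

lemma weight_eq_two (h : ¬ C.Saturated X l v) : C.weight X l v = 2 := if_neg h

lemma card_le_totalWeight : #X ≤ C.totalWeight X l := by
  simpa [totalWeight] using card_nsmul_le_sum X _ 1 fun _ _ => C.one_le_weight

lemma totalWeight_le_two_mul_card : C.totalWeight X l ≤ 2 * #X := by
  simpa [totalWeight, mul_comm] using sum_le_card_nsmul X _ 2 fun _ _ => C.weight_le_two

lemma weight_le_of_reduces (h : ∀ p, Reduces (C.graph p) X (l p) S (l' p)) (v : V) :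
    C.weight X l v ≤ C.weight S l' v := by
  by_cases hv : C.Saturated S l' v
  · obtain ⟨p, hp⟩ := hv
    exact (weight_eq_one ⟨p, (h p).memCliqueOn v hp⟩).trans_le one_le_weight
  · exact weight_le_two.trans_eq (weight_eq_two hv).symm

lemma sum_weight_le_totalWeight (h : ∀ p, Reduces (C.graph p) X (l p) S (l' p)) :
    ∑ v ∈ S, C.weight X l v ≤ C.totalWeight S l' :=
  sum_le_sum fun v _ => weight_le_of_reduces h v

lemma eq_of_adj_of_level_one {p : K} (hl : NearCliqueFreeOn (C.graph p) X 1) (hu : u ∈ X)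
    (hv : v ∈ X) (hw : w ∈ X) (hvu : (C.graph p).Adj v u) (hwu : (C.graph p).Adj w u) : v = w :=
  hl {u} (by simpa using hu) (by simp) v hv w hw (by simpa using hvu) (by simpa using hwu)

/-- An edge of a colour of level one is isolated in that colour, so in the absence of rainbow
triangles its ends are twins. -/
lemma color_eq_and_ne_of_level_one (hl : NearCliqueFreeOn (C.graph (C u v)) X 1) (hu : u ∈ X)
    (hv : v ∈ X) (hw : w ∈ X) (huv : u ≠ v) (hwu : w ≠ u) (hwv : w ≠ v) :
    C u w = C v w ∧ C u w ≠ C u v := by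
  have huw : C u w ≠ C u v := fun h => hwv.symm <|
    eq_of_adj_of_level_one hl hu hv hw ⟨huv.symm, C.symm v u⟩ ⟨hwu, C.symm w u ▸ h⟩
  have hvw : C v w ≠ C u v := fun h => hwu.symm <|
    eq_of_adj_of_level_one hl hv hu hw ⟨huv, rfl⟩ ⟨hwv, C.symm w v ▸ h⟩
  rcases C.not_rainbow huv hwu.symm hwv.symm with h | h | h
  · exact absurd h.symm huw
  · exact absurd h.symm hvw
  · exact ⟨h, huw⟩

lemma not_saturated_erase_of_level_one (hX : C.Admissible X l) (hu : u ∈ X) (hv : v ∈ X)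
    (huv : u ≠ v) (hone : l (C u v) = 1) : ¬ C.Saturated (X.erase v) l u := by
  have hl : NearCliqueFreeOn (C.graph (C u v)) X 1 := hone ▸ hX (C u v)
  rintro ⟨p, Q, hQX, hQ, huQ⟩
  have hQX' : ∀ q ∈ Q, q ≠ v ∧ q ∈ X := fun q hq => mem_erase.1 (hQX hq)
  by_cases hp : p = C u v
  · obtain ⟨w, hw, hwu⟩ := exists_mem_ne (by rw [hQ.2, hp, hone]; omega : 1 < #Q) u
    have huw : C u w = p := (hQ.1 huQ hw hwu.symm).2
    exact (color_eq_and_ne_of_level_one hl hu hv (hQX' w hw).2 huv hwu (hQX' w hw).1).2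
      (huw.trans hp)
  · have hadj : ∀ q ∈ Q.erase u, (C.graph p).Adj u q ∧ (C.graph p).Adj v q := fun q hq => by
      obtain ⟨hqu, hqQ⟩ := mem_erase.1 hq
      have huq : C u q = p := (hQ.1 huQ hqQ hqu.symm).2
      have htwin := color_eq_and_ne_of_level_one hl hu hv (hQX' q hqQ).2 huv hqu (hQX' q hqQ).1
      exact ⟨⟨hqu.symm, huq⟩, (hQX' q hqQ).1.symm, htwin.1 ▸ huq⟩
    exact huv <| hX p (Q.erase u) (fun q hq => (hQX' q (mem_of_mem_erase hq)).2)
      (hQ.erase_of_mem huQ) u hu v hv (fun q hq => (hadj q hq).1) fun q hq => (hadj q hq).2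

/-- Both ends of an edge of a colour of level one are saturated, and deleting one of them makes
the other one unsaturated. -/
lemma totalWeight_le_erase (hX : C.Admissible X l) (hu : u ∈ X) (hv : v ∈ X) (huv : u ≠ v)
    (hone : l (C u v) = 1) : C.totalWeight X l ≤ C.totalWeight (X.erase v) l := by
  have hsat_u : C.Saturated X l u :=
    ⟨C u v, hone.symm ▸ memCliqueOn_two hu hv ⟨huv, rfl⟩⟩
  have hsat_v : C.Saturated X l v :=
    ⟨C u v, hone.symm ▸ memCliqueOn_two hv hu ⟨huv.symm, C.symm v u⟩⟩
  have hunsat := not_saturated_erase_of_level_one hX hu hv huv hone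
  have hrest : ∑ x ∈ (X.erase v).erase u, C.weight X l x ≤
      ∑ x ∈ (X.erase v).erase u, C.weight (X.erase v) l x :=
    sum_le_sum fun x _ => weight_le_of_reduces (fun p => (hX p).reduces (erase_subset _ _)) x
  have hu' : u ∈ X.erase v := mem_erase.2 ⟨huv, hu⟩
  rw [totalWeight, totalWeight, ← add_sum_erase X _ hv, ← add_sum_erase _ _ hu',
    ← add_sum_erase _ _ hu', weight_eq_one hsat_u, weight_eq_one hsat_v, weight_eq_two hunsat]
  omega

end GallaiColoring

/-! ### Gallai's theorem -/

namespace GallaiColoring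

variable {V K : Type*} {C : GallaiColoring V K} {X S A : Finset V} {i j : K} {R : Setoid V}
  {v : V}

/-- The classes of `R` partition `X` into modules: between two classes all edges have the same
colour, which is `i` or `j`. -/
structure IsModularPartition (C : GallaiColoring V K) (X : Finset V) (i j : K) (R : Setoid V) :
    Prop where
  color_eq_or : ∀ u ∈ X, ∀ v ∈ X, ¬ R u v → C u v = i ∨ C u v = j
  color_congr : ∀ u ∈ X, ∀ u' ∈ X, ∀ v ∈ X, R u u' → ¬ R u v → C u v = C u' v

/-- The graph of the edges inside `X` whose colour is neither `i` nor `j`. -/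
def otherColors (C : GallaiColoring V K) (X : Finset V) (i j : K) : SimpleGraph V where
  Adj u v := u ≠ v ∧ u ∈ X ∧ v ∈ X ∧ C u v ≠ i ∧ C u v ≠ j
  symm := ⟨fun u v h => by simpa only [C.symm v u, ne_comm, and_left_comm] using h⟩
  loopless := ⟨fun _ h => h.1 rfl⟩

lemma isModularPartition_otherColors :
    C.IsModularPartition X i j (C.otherColors X i j).reachableSetoid := by
  have hcross : ∀ u ∈ X, ∀ v ∈ X, ¬ (C.otherColors X i j).Reachable u v →
      C u v = i ∨ C u v = j := fun u hu v hv huv => by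
    by_contra! h
    exact huv (Adj.reachable ⟨fun h => huv (h ▸ Reachable.refl u), hu, hv, h⟩)
  refine ⟨hcross, fun u _ u' _ v hv huu' huv => ?_⟩
  induction (reachable_iff_reflTransGen u u').1 huu' with
  | refl => rfl
  | @tail b d hub hbd ih =>
    have hub' := (reachable_iff_reflTransGen u b).2 hub
    have hbv : ¬ (C.otherColors X i j).Reachable b v := fun h => huv (hub'.trans h)
    have hdv : ¬ (C.otherColors X i j).Reachable d v := fun h => hbv (hbd.reachable.trans h)
    have ⟨hbd_ne, hb, hd, hbd_i, hbd_j⟩ := hbd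
    rw [ih hb hub']
    have hne : ∀ {w}, ¬ (C.otherColors X i j).Reachable w v → w ≠ v :=
      fun hwv h => hwv (h ▸ Reachable.refl _)
    rcases C.not_rainbow hbd_ne (hne hbv) (hne hdv) with h | h | h
    · rcases hcross b hb v hv hbv with h' | h' <;> simp_all
    · rcases hcross d hd v hv hdv with h' | h' <;> simp_all
    · exact h

/-- A set cut by edges of the colours `i` and `j` has a modular partition with these colours and
more than one class: the components of the remaining colours. -/
lemma exists_isModularPartition_of_cut (hA : A.Nonempty) (hAX : A ⊂ X)
    (hcut : ∀ u ∈ A, ∀ v ∈ X \ A, C u v = i ∨ C u v = j) :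
    ∃ R, C.IsModularPartition X i j R ∧ ∃ u ∈ X, ∃ v ∈ X, ¬ R u v := by
  obtain ⟨u, hu⟩ := hA
  obtain ⟨v, hvX, hvA⟩ := exists_of_ssubset hAX
  have hclosed : ∀ w, Relation.ReflTransGen (C.otherColors X i j).Adj u w → w ∈ A := fun w hw => by
    induction hw with
    | refl => exact hu
    | @tail b d _ hbd hbA =>
      obtain ⟨-, -, hd, hbd_i, hbd_j⟩ := hbd
      by_contra hdA
      exact (hcut b hbA d (mem_sdiff.2 ⟨hd, hdA⟩)).elim hbd_i hbd_j
  exact ⟨_, isModularPartition_otherColors, u, hAX.subset hu, v, hvX,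
    fun huv => hvA (hclosed v ((reachable_iff_reflTransGen u v).1 huv))⟩

namespace IsModularPartition

lemma mono (h : C.IsModularPartition X i j R) (hS : S ⊆ X) : C.IsModularPartition S i j R :=
  ⟨fun u hu v hv => h.color_eq_or u (hS hu) v (hS hv),
    fun u hu u' hu' v hv => h.color_congr u (hS hu) u' (hS hu') v (hS hv)⟩

lemma swap (h : C.IsModularPartition X i j R) : C.IsModularPartition X j i R :=
  ⟨fun u hu v hv hR => (h.color_eq_or u hu v hv hR).symm, h.color_congr⟩

end IsModularPartition

section InsertVertex

variable (P : C.IsModularPartition X i j R) (hv : v ∉ X)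
include P hv

lemma IsModularPartition.color_eq_of_not_rel {a b : V} (ha : a ∈ X) (hb : b ∈ X) (hab : ¬ R a b)
    (hai : C v a ≠ i) (haj : C v a ≠ j) (hbi : C v b ≠ i) (hbj : C v b ≠ j) :
    C v a = C v b := by
  have := P.color_eq_or a ha b hb hab
  have := C.not_rainbow (ne_of_mem_of_not_mem ha hv).symm (ne_of_mem_of_not_mem hb hv).symm
    (fun h => hab (h ▸ R.refl' a))
  grind

lemma IsModularPartition.color_eq_of_color_eq_or {a z : V} (ha : a ∈ X) (hz : z ∈ X)
    (haz : ¬ R a z) (hzi : C v z ≠ i) (hzj : C v z ≠ j) (hva : C v a = i ∨ C v a = j) :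
    C a z = C v a := by
  have := P.color_eq_or a ha z hz haz
  have := C.not_rainbow (ne_of_mem_of_not_mem ha hv).symm (ne_of_mem_of_not_mem hz hv).symm
    (fun h => haz (h ▸ R.refl' a))
  grind

variable (hclass : ∀ a ∈ X, ∃ a' ∈ X, R a a' ∧ C v a' ≠ i ∧ C v a' ≠ j)
include hclass

lemma IsModularPartition.not_both_colors (hij : i ≠ j)
    (haway : ∀ a, ∃ z ∈ X, ¬ R a z ∧ C v z ≠ i ∧ C v z ≠ j) {a b : V} (ha : a ∈ X) (hb : b ∈ X)
    (hai : C v a = i) : C v b ≠ j := by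
  intro hbj
  have hforce := fun {a z} => P.color_eq_of_color_eq_or hv (a := a) (z := z)
  suffices C v a = C v b from hij (by rw [← hai, ← hbj, this])
  by_cases hab : R a b
  · obtain ⟨z, hz, haz, hzi, hzj⟩ := haway a
    have hbz : ¬ R b z := fun h => haz (R.trans' hab h)
    rw [← hforce ha hz haz hzi hzj (.inl hai), ← hforce hb hz hbz hzi hzj (.inr hbj)]
    exact P.color_congr a ha b hb z hz hab haz
  · obtain ⟨a', ha', haa', hai', haj'⟩ := hclass a ha
    obtain ⟨b', hb', hbb', hbi', hbj'⟩ := hclass b hb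
    have hab' : ¬ R a b' := fun h => hab (R.trans' h (R.symm' hbb'))
    have hba' : ¬ R b a' := fun h => hab (R.trans' haa' (R.symm' h))
    calc C v a = C a b' := (hforce ha hb' hab' hbi' hbj' (.inl hai)).symm
      _ = C b' a := C.symm _ _
      _ = C b a := (P.color_congr b hb b' hb' a ha hbb' fun h => hab (R.symm' h)).symm
      _ = C a b := C.symm _ _
      _ = C a' b := P.color_congr a ha a' ha' b hb haa' hab
      _ = C b a' := C.symm _ _
      _ = C v b := hforce hb ha' hba' hai' haj' (.inr hbj)

lemma IsModularPartition.exists_two_colors (hij : i ≠ j) (hR : ∃ u ∈ X, ∃ w ∈ X, ¬ R u w) :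
    ∃ p q, p ≠ q ∧ ∀ a ∈ X, C v a = p ∨ C v a = q := by
  have haway : ∀ a, ∃ z ∈ X, ¬ R a z ∧ C v z ≠ i ∧ C v z ≠ j := fun a => by
    obtain ⟨u, hu, w, hw, huw⟩ := hR
    by_cases hau : R a u
    · obtain ⟨z, hz, hwz, hz'⟩ := hclass w hw
      exact ⟨z, hz, fun haz => huw (R.trans' (R.symm' hau) (R.trans' haz (R.symm' hwz))), hz'⟩
    · obtain ⟨z, hz, huz, hz'⟩ := hclass u hu
      exact ⟨z, hz, fun haz => hau (R.trans' haz (R.symm' huz)), hz'⟩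
  obtain ⟨u, hu, -⟩ := hR
  obtain ⟨x, hx, -, hxi, hxj⟩ := hclass u hu
  have hcolors : ∀ a ∈ X, C v a = i ∨ C v a = j ∨ C v a = C v x := fun a ha => by
    by_contra! h
    obtain ⟨hai, haj, hax⟩ := h
    obtain ⟨z, hz, haz, hzi, hzj⟩ := haway a
    have haz' := P.color_eq_of_not_rel hv ha hz haz hai haj hzi hzj
    by_cases hxz : R x z
    · exact hax (P.color_eq_of_not_rel hv ha hx (fun h => haz (R.trans' h hxz)) hai haj hxi hxj)
    · exact hax (haz'.trans (P.color_eq_of_not_rel hv hx hz hxz hxi hxj hzi hzj).symm)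
  by_cases hi : ∃ a ∈ X, C v a = i
  · obtain ⟨a, ha, hai⟩ := hi
    refine ⟨C v x, i, hxi, fun b hb => ?_⟩
    have := P.not_both_colors hv hclass hij haway ha hb hai
    have := hcolors b hb
    tauto
  · refine ⟨C v x, j, hxj, fun b hb => ?_⟩
    have := hcolors b hb
    have := fun h => hi ⟨b, hb, h⟩
    tauto

end InsertVertex

lemma exists_cut [Nontrivial K] (C : GallaiColoring V K) (X : Finset V) (hX : 2 ≤ #X) :
    ∃ i j, i ≠ j ∧ ∃ A ⊂ X, A.Nonempty ∧ ∀ u ∈ A, ∀ v ∈ X \ A, C u v = i ∨ C u v = j := by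
  induction X using Finset.induction_on with
  | empty => simp at hX
  | @insert v Y hv ih =>
    rw [card_insert_of_notMem hv] at hX
    have hisolate : ∀ p q, p ≠ q → (∀ a ∈ Y, C v a = p ∨ C v a = q) → ∃ i j, i ≠ j ∧
        ∃ A ⊂ insert v Y, A.Nonempty ∧ ∀ u ∈ A, ∀ w ∈ insert v Y \ A, C u w = i ∨ C u w = j := by
      intro p q hpq hvY
      have hY : Y.Nonempty := card_pos.1 (by omega)
      have hss : {v} ⊂ insert v Y := by
        obtain ⟨y, hy⟩ := hY
        exact (ssubset_iff_of_subset (by simp)).2 ⟨y, by simp [hy], by grind⟩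
      exact ⟨p, q, hpq, {v}, hss, by simp, by grind⟩
    rcases (by omega : #Y = 1 ∨ 2 ≤ #Y) with hY | hY
    · obtain ⟨u, rfl⟩ := card_eq_one.1 hY
      obtain ⟨q, hq⟩ := exists_ne (C v u)
      exact hisolate (C v u) q hq.symm (by simp)
    obtain ⟨i, j, hij, A, hAY, hA, hcut⟩ := ih hY
    obtain ⟨R, P, hR⟩ := exists_isModularPartition_of_cut hA hAY hcut
    by_cases hclass : ∀ a ∈ Y, ∃ a' ∈ Y, R a a' ∧ C v a' ≠ i ∧ C v a' ≠ j
    · obtain ⟨p, q, hpq, hvY⟩ := P.exists_two_colors hv hclass hij hR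
      exact hisolate p q hpq hvY
    · push Not at hclass
      obtain ⟨a, ha, hclass⟩ := hclass
      refine ⟨i, j, hij, Y.filter (R a), ?_, ⟨a, by simp [ha]⟩, fun u hu w hw => ?_⟩
      · exact (ssubset_iff_of_subset ((filter_subset _ _).trans (subset_insert _ _))).2
          ⟨v, by simp, by simp [hv]⟩
      · obtain ⟨huY, hau⟩ := mem_filter.1 hu
        obtain ⟨hw, hwR⟩ := mem_sdiff.1 hw
        rcases mem_insert.1 hw with rfl | hwY
        · have := hclass u huY hau
          rw [C.symm u w]
          tauto
        · exact P.color_eq_or u huY w hwY fun huw =>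
            hwR (mem_filter.2 ⟨hwY, R.trans' hau huw⟩)

/-- Gallai's theorem. -/
theorem exists_isModularPartition [Nontrivial K] (C : GallaiColoring V K) (X : Finset V)
    (hX : 2 ≤ #X) : ∃ i j, i ≠ j ∧ ∃ R, C.IsModularPartition X i j R ∧
      ∃ u ∈ X, ∃ v ∈ X, ¬ R u v := by
  obtain ⟨i, j, hij, A, hAX, hA, hcut⟩ := exists_cut C X hX
  exact ⟨i, j, hij, exists_isModularPartition_of_cut hA hAX hcut⟩

end GallaiColoring

/-! ### Two-coloured complete graphs -/

section NearCliqueFree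

variable {V : Type*} {G : SimpleGraph V} {X : Finset V} {m : ℕ} {a b u v : V}

lemma NearCliqueFreeOn.card_le (h : NearCliqueFreeOn G X m) (hX : G.IsClique (X : Set V)) :
    #X ≤ m + 1 := by
  by_contra! hcard
  obtain ⟨Q, hQX, hQ⟩ := exists_subset_card_eq (by omega : m ≤ #X)
  obtain ⟨u, hu, v, hv, huv⟩ := one_lt_card.1
    (by rw [card_sdiff_of_subset hQX]; omega : 1 < #(X \ Q))
  have hadj : ∀ w ∈ X \ Q, ∀ q ∈ Q, G.Adj w q := fun w hw q hq =>
    hX (mem_sdiff.1 hw).1 (hQX hq) fun h => (mem_sdiff.1 hw).2 (h ▸ hq)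
  exact huv <| h Q hQX ⟨hX.subset (mod_cast hQX), hQ⟩ u (mem_sdiff.1 hu).1 v (mem_sdiff.1 hv).1
    (hadj u hu) (hadj v hv)

lemma NearCliqueFreeOn.eq_of_common_neighbors (h : NearCliqueFreeOn G X 2) (hu : u ∈ X)
    (hv : v ∈ X) (ha : a ∈ X) (hb : b ∈ X) (hab : G.Adj a b) (hua : G.Adj u a) (hub : G.Adj u b)
    (hva : G.Adj v a) (hvb : G.Adj v b) : u = v :=
  h {a, b} (by simp [insert_subset_iff, ha, hb])
    (by simpa [isNClique_iff, hab] using card_pair hab.ne) u hu v hv (by simp [hua, hub])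
    (by simp [hva, hvb])

lemma memCliqueOn_three : MemCliqueOn G X 3 v ↔
    v ∈ X ∧ ∃ a ∈ X, ∃ b ∈ X, G.Adj v a ∧ G.Adj v b ∧ G.Adj a b := by
  constructor
  · rintro ⟨Q, hQX, hQ, hv⟩
    obtain ⟨a, b, hab, hQv⟩ := card_eq_two.1 (hQ.erase_of_mem hv).2
    have ha : a ∈ Q.erase v := by simp [hQv]
    have hb : b ∈ Q.erase v := by simp [hQv]
    rw [mem_erase] at ha hb
    exact ⟨hQX hv, a, hQX ha.2, b, hQX hb.2, hQ.1 hv ha.2 ha.1.symm, hQ.1 hv hb.2 hb.1.symm,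
      hQ.1 ha.2 hb.2 hab⟩
  · rintro ⟨hv, a, ha, b, hb, hva, hvb, hab⟩
    exact ⟨{v, a, b}, by simp [insert_subset_iff, hv, ha, hb],
      is3Clique_triple_iff.2 ⟨hva, hvb, hab⟩, by simp⟩

lemma even_sum_card_filter_adj (G : SimpleGraph V) (S : Finset V) :
    Even (∑ v ∈ S, #{u ∈ S | G.Adj v u}) := by
  have hdegree : ∀ v : S, (G.induce (S : Set V)).degree v = #{u ∈ S | G.Adj v u} := fun v => by
    rw [← card_neighborFinset_eq_degree, ← card_map (Function.Embedding.subtype _)]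
    congr 1
    ext u
    simp [and_comm]
  rw [← sum_coe_sort, ← sum_congr rfl fun v _ => hdegree v]
  exact (sum_degrees_eq_twice_card_edges (G.induce (S : Set V))) ▸ even_two_mul _

end NearCliqueFree

/-- The class of `v` inside `X`. -/
noncomputable def cell {V : Type*} (X : Finset V) (R : Setoid V) (v : V) : Finset V :=
  X.filter (R v)

namespace GallaiColoring

variable {V K : Type*} {C : GallaiColoring V K} {X S : Finset V} {i j p : K} {R : Setoid V}
  {l : K → ℕ} {u v : V}

/-- The vertices of `X` outside the class of `v` that are joined to `v` in colour `p`. -/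
noncomputable def outer (C : GallaiColoring V K) (X : Finset V) (R : Setoid V) (v : V) (p : K) :
    Finset V :=
  X.filter fun u => ¬ R v u ∧ C v u = p

/-- The levels `l`, with those of `i` and `j` replaced by `a` and `b`. -/
noncomputable def pairLevel (l : K → ℕ) (i j : K) (a b : ℕ) : K → ℕ :=
  Function.update (Function.update l i a) j b

section Basic

variable {a b : ℕ}

lemma mem_cell : u ∈ cell X R v ↔ u ∈ X ∧ R v u := mem_filter

lemma mem_outer : u ∈ C.outer X R v p ↔ u ∈ X ∧ ¬ R v u ∧ C v u = p := mem_filter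

lemma cell_subset : cell X R v ⊆ X := filter_subset _ _

lemma outer_subset : C.outer X R v p ⊆ X := filter_subset _ _

lemma cell_ssubset (h : (C.outer X R v p).Nonempty) : cell X R v ⊂ X := by
  obtain ⟨u, hu⟩ := h
  obtain ⟨huX, hvu, -⟩ := mem_outer.1 hu
  exact ⟨cell_subset, fun hsub => hvu (mem_cell.1 (hsub huX)).2⟩

lemma outer_ssubset (hv : v ∈ X) : C.outer X R v p ⊂ X :=
  ⟨outer_subset, fun hsub => (mem_outer.1 (hsub hv)).2.1 (R.refl' v)⟩

lemma mem_cell_self (hv : v ∈ X) : v ∈ cell X R v := mem_cell.2 ⟨hv, R.refl' v⟩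

lemma cell_bot (hv : v ∈ X) : cell X ⊥ v = {v} := by
  ext u
  simp only [mem_cell, Setoid.bot_def, mem_singleton]
  grind

lemma mem_outer_bot : u ∈ C.outer X ⊥ v p ↔ u ∈ X ∧ (C.graph p).Adj v u := by
  simp [mem_outer, graph_adj]

lemma pairLevel_left (hij : i ≠ j) : pairLevel l i j a b i = a := by
  simp [pairLevel, hij]

lemma pairLevel_right : pairLevel l i j a b j = b := by
  simp [pairLevel]

lemma pairLevel_pairLevel (hij : i ≠ j) (a b a' b' : ℕ) :
    pairLevel (pairLevel l i j a b) i j a' b' = pairLevel l i j a' b' := by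
  simp only [pairLevel]
  rw [Function.update_comm (f := l) hij, Function.update_idem, Function.update_comm hij.symm,
    Function.update_idem]

lemma reduces_pairLevel (hX : C.Admissible X l) (hS : S ⊆ X)
    (hi : Reduces (C.graph i) X (l i) S a) (hj : Reduces (C.graph j) X (l j) S b) (p : K) :
    Reduces (C.graph p) X (l p) S (pairLevel l i j a b p) := by
  by_cases hpj : p = j
  · subst hpj
    rwa [pairLevel_right]
  by_cases hpi : p = i
  · subst hpi
    rwa [pairLevel_left hpj]
  · simpa [pairLevel, hpi, hpj] using (hX p).reduces hS

end Basic

namespace IsModularPartition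

variable (P : C.IsModularPartition X i j R) (hv : v ∈ X)
include P hv

lemma sum_eq (hij : i ≠ j) (f : V → ℕ) : ∑ u ∈ X, f u =
    ∑ u ∈ cell X R v, f u + ∑ u ∈ C.outer X R v i, f u + ∑ u ∈ C.outer X R v j, f u := by
  simp only [cell, outer, sum_filter, ← sum_add_distrib]
  refine sum_congr rfl fun u hu => ?_
  by_cases hvu : R v u
  · simp [hvu]
  · rcases P.color_eq_or v hv u hu hvu with h | h
    · simp [hvu, h, hij]
    · simp [hvu, h, hij.symm]

lemma adj_of_mem_cell_of_mem_outer {x y : V} (hx : x ∈ cell X R v) (hy : y ∈ C.outer X R v p) :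
    (C.graph p).Adj x y := by
  obtain ⟨hxX, hvx⟩ := mem_cell.1 hx
  obtain ⟨hyX, hvy, hcol⟩ := mem_outer.1 hy
  exact ⟨fun hxy => hvy (hxy ▸ hvx), P.color_congr v hv x hxX y hyX hvx hvy ▸ hcol⟩

lemma cell_subset_outer (hu : u ∈ C.outer X R v p) : cell X R u ⊆ C.outer X R v p := by
  intro w hw
  obtain ⟨hwX, huw⟩ := mem_cell.1 hw
  obtain ⟨huX, hvu, hcol⟩ := mem_outer.1 hu
  refine mem_outer.2 ⟨hwX, fun hvw => hvu (R.trans' hvw (R.symm' huw)), ?_⟩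
  rw [C.symm v w, ← P.color_congr u huX w hwX v hv huw fun huv => hvu (R.symm' huv), C.symm u v,
    hcol]

lemma reduces_cell {a : ℕ} (hX : C.Admissible X l) (hne : (C.outer X R v p).Nonempty)
    (ha : l p = 1 + a) : Reduces (C.graph p) X (l p) (cell X R v) a :=
  ha ▸ Reduces.of_join (ha ▸ hX p) outer_subset cell_subset
    (fun _ hx _ hy => (P.adj_of_mem_cell_of_mem_outer hv hy hx).symm) (not_cliqueFreeOn_one hne)

lemma reduces_outer {a b : ℕ} (hX : C.Admissible X l)
    (hcell : ¬ (C.graph p).CliqueFreeOn (cell X R v : Set V) a) (hab : l p = a + b) :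
    Reduces (C.graph p) X (l p) (C.outer X R v p) b :=
  hab ▸ Reduces.of_join (hab ▸ hX p) cell_subset outer_subset
    (fun _ hx _ hy => P.adj_of_mem_cell_of_mem_outer hv hx hy) hcell

lemma reduces_outer_of_one_add {b : ℕ} (hX : C.Admissible X l) (hb : l p = 1 + b) :
    Reduces (C.graph p) X (l p) (C.outer X R v p) b :=
  P.reduces_outer hv hX (not_cliqueFreeOn_one ⟨v, mem_cell_self hv⟩) hb

end IsModularPartition

end GallaiColoring

namespace GallaiColoring
namespace IsModularPartition

variable {V K : Type*} {C : GallaiColoring V K} {S : Finset V} {i j p : K} {l : K → ℕ} {u v : V}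

section TwoColored

variable (P : C.IsModularPartition S i j ⊥) (hij : i ≠ j) (hS : C.Admissible S l)

include P in
lemma color_eq_or_of_ne (hu : u ∈ S) (hv : v ∈ S) (huv : u ≠ v) : C u v = i ∨ C u v = j :=
  P.color_eq_or u hu v hv huv

include P hS in
lemma totalWeight_le_of_level_one (hi : 1 ≤ l i) (hj : l j = 1) :
    C.totalWeight S l ≤ 2 * l i := by
  induction S using Finset.strongInduction with
  | H S ih =>
    by_cases hedge : ∃ u ∈ S, ∃ v ∈ S, u ≠ v ∧ C u v = j
    · obtain ⟨u, hu, v, hv, huv, hcol⟩ := hedge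
      exact (totalWeight_le_erase hS hu hv huv (hcol ▸ hj)).trans <|
        ih _ (erase_ssubset hv) (P.mono (erase_subset _ _)) (hS.mono (erase_subset _ _))
    · push Not at hedge
      have hclique : (C.graph i).IsClique (S : Set V) := fun u hu v hv huv =>
        ⟨huv, (P.color_eq_or_of_ne hu hv huv).resolve_right (hedge u hu v hv huv)⟩
      rcases ((hS i).card_le hclique).lt_or_eq with hcard | hcard
      · have := C.totalWeight_le_two_mul_card (X := S) (l := l)
        omega
      · have hsat : ∀ v ∈ S, C.weight S l v = 1 := fun v hv =>
          weight_eq_one ⟨i, S, Subset.rfl, ⟨hclique, hcard⟩, hv⟩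
        rw [totalWeight, sum_congr rfl hsat, ← card_eq_sum_ones]
        omega

include P hij in
lemma totalWeight_eq_add_outer (hv : v ∈ S) : C.totalWeight S l = C.weight S l v +
    ∑ u ∈ C.outer S ⊥ v i, C.weight S l u + ∑ u ∈ C.outer S ⊥ v j, C.weight S l u := by
  rw [totalWeight, P.sum_eq hv hij, cell_bot hv, sum_singleton]

include P hS in
lemma reduces_outer_left (hv : v ∈ S) {b : ℕ} (hi : l i = 1 + b) (p : K) :
    Reduces (C.graph p) S (l p) (C.outer S ⊥ v i) (pairLevel l i j b (l j) p) :=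
  reduces_pairLevel hS outer_subset (P.reduces_outer_of_one_add hv hS hi)
    ((hS j).reduces outer_subset) p

include P hij hS

lemma sum_outer_le_of_level_two (hv : v ∈ S) (hi : l i = 2) (hj : 1 ≤ l j) :
    ∑ u ∈ C.outer S ⊥ v i, C.weight S l u ≤ 2 * l j := by
  have hred := P.reduces_outer_left hS hv (b := 1) hi
  refine (sum_weight_le_totalWeight hred).trans ?_
  simpa only [pairLevel_right] using (P.swap.mono outer_subset).totalWeight_le_of_level_one
    (fun p => (hred p).nearCliqueFreeOn) (by rwa [pairLevel_right]) (pairLevel_left hij)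

lemma totalWeight_le_weight_add_eight (hv : v ∈ S) (hi : l i = 2) (hj : l j = 2) :
    C.totalWeight S l ≤ C.weight S l v + 8 := by
  have h_i := P.sum_outer_le_of_level_two hij hS hv hi (by omega)
  have h_j := P.swap.sum_outer_le_of_level_two hij.symm hS hv hj (by omega)
  rw [P.totalWeight_eq_add_outer hij hv]
  omega

lemma totalWeight_le_ten (hi : l i = 2) (hj : l j = 2) : C.totalWeight S l ≤ 10 := by
  rcases S.eq_empty_or_nonempty with rfl | ⟨v, hv⟩
  · simp [totalWeight]
  · have := P.totalWeight_le_weight_add_eight hij hS hv hi hj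
    have := C.weight_le_two (X := S) (l := l) (v := v)
    omega

section LevelsThreeTwo

variable (hi : l i = 3) (hj : l j = 2)
include hi hj

lemma sum_outer_le_ten (hv : v ∈ S) : ∑ u ∈ C.outer S ⊥ v i, C.weight S l u ≤ 10 := by
  have hred := P.reduces_outer_left hS hv (b := 2) hi
  exact (sum_weight_le_totalWeight hred).trans <| (P.mono outer_subset).totalWeight_le_ten hij
    (fun p => (hred p).nearCliqueFreeOn) (pairLevel_left hij) (pairLevel_right.trans hj)

lemma not_saturated_of_sum_outer_eq_ten (hv : v ∈ S)
    (hsum : ∑ u ∈ C.outer S ⊥ v i, C.weight S l u = 10) (hu : u ∈ C.outer S ⊥ v i) :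
    ¬ C.Saturated S l u := by
  have hred := P.reduces_outer_left hS hv (b := 2) hi
  set l' := pairLevel l i j 2 (l j)
  have hten : C.totalWeight (C.outer S ⊥ v i) l' ≤ C.weight (C.outer S ⊥ v i) l' u + 8 :=
    (P.mono outer_subset).totalWeight_le_weight_add_eight hij
      (fun p => (hred p).nearCliqueFreeOn) hu (pairLevel_left hij) (pairLevel_right.trans hj)
  intro hsat
  have hweight := weight_eq_one hsat
  by_cases hsat' : C.Saturated (C.outer S ⊥ v i) l' u
  · have := sum_weight_le_totalWeight hred
    rw [weight_eq_one hsat'] at hten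
    omega
  · have : ∑ w ∈ C.outer S ⊥ v i, C.weight S l w < C.totalWeight (C.outer S ⊥ v i) l' :=
      sum_lt_sum (fun w _ => weight_le_of_reduces hred w)
        ⟨u, hu, by rw [hweight, weight_eq_two hsat']; omega⟩
    rw [weight_eq_two hsat'] at hten
    omega

lemma sum_outer_le_six (hv : v ∈ S) : ∑ u ∈ C.outer S ⊥ v j, C.weight S l u ≤ 6 := by
  simpa only [hi] using P.swap.sum_outer_le_of_level_two hij.symm hS hv hj (by omega)

section Heavy

variable (hheavy : 17 ≤ C.totalWeight S l)
include hheavy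

lemma sum_outer_eq_of_saturated (hv : v ∈ S) (hsat : C.Saturated S l v) :
    ∑ u ∈ C.outer S ⊥ v i, C.weight S l u = 10 ∧ ∑ u ∈ C.outer S ⊥ v j, C.weight S l u = 6 := by
  have h_i := P.sum_outer_le_ten hij hS hi hj hv
  have h_j := P.sum_outer_le_six hij hS hi hj hv
  rw [P.totalWeight_eq_add_outer hij hv, weight_eq_one hsat] at hheavy
  omega

lemma not_saturated_of_adj_of_saturated (hv : v ∈ S) (hsat : C.Saturated S l v) (hu : u ∈ S)
    (hadj : (C.graph i).Adj v u) : ¬ C.Saturated S l u :=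
  P.not_saturated_of_sum_outer_eq_ten hij hS hi hj hv
    (P.sum_outer_eq_of_saturated hij hS hi hj hheavy hv hsat).1 (mem_outer_bot.2 ⟨hu, hadj⟩)

lemma not_memCliqueOn_four (hv : v ∈ S) : ¬ MemCliqueOn (C.graph i) S 4 v := by
  rintro ⟨Q, hQS, hQ, hvQ⟩
  have hsat : ∀ u ∈ Q, C.Saturated S l u := fun u hu => ⟨i, Q, hQS, by rwa [hi], hu⟩
  obtain ⟨u, hu, huv⟩ := exists_mem_ne (by rw [hQ.2]; omega : 1 < #Q) v
  exact P.not_saturated_of_adj_of_saturated hij hS hi hj hheavy hv (hsat v hvQ) (hQS hu)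
    (hQ.1 hvQ hu huv.symm) (hsat u hu)

/-- The neighbours of an unsaturated vertex in colour `j` form a clique of colour `i`. -/
lemma sum_outer_eq_ten_of_adj (hu : u ∈ S) (hu_sat : ¬ C.Saturated S l u) (hv : v ∈ S)
    (hv_sat : C.Saturated S l v) (hadj : (C.graph j).Adj u v) :
    ∑ w ∈ C.outer S ⊥ u i, C.weight S l w = 10 := by
  have hvu : v ∈ C.outer S ⊥ u j := mem_outer_bot.2 ⟨hv, hadj⟩
  have hclique : (C.graph i).IsClique (C.outer S ⊥ u j : Set V) := fun a ha b hb hab => by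
    obtain ⟨haS, hua⟩ := mem_outer_bot.1 (mem_coe.1 ha)
    obtain ⟨hbS, hub⟩ := mem_outer_bot.1 (mem_coe.1 hb)
    refine ⟨hab, (P.color_eq_or_of_ne haS hbS hab).resolve_right fun hcol => hu_sat ⟨j, ?_⟩⟩
    rw [hj]
    exact memCliqueOn_three.2 ⟨hu, a, haS, b, hbS, hua, hub, hab, hcol⟩
  have hcard : #(C.outer S ⊥ u j) ≤ 3 := by
    have hle := ((hS i).mono outer_subset).card_le hclique
    refine Nat.le_of_lt_succ (lt_of_le_of_ne (hi ▸ hle) fun hfour => ?_)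
    exact P.not_memCliqueOn_four hij hS hi hj hheavy hv ⟨_, outer_subset, ⟨hclique, hfour⟩, hvu⟩
  have hsum : ∑ w ∈ (C.outer S ⊥ u j).erase v, C.weight S l w ≤ 2 * 2 :=
    (sum_le_card_nsmul _ _ 2 fun _ _ => C.weight_le_two).trans <| by
      rw [card_erase_of_mem hvu, smul_eq_mul]
      omega
  have h_i := P.sum_outer_le_ten hij hS hi hj hu
  rw [P.totalWeight_eq_add_outer hij hu, weight_eq_two hu_sat, ← add_sum_erase _ _ hvu,
    weight_eq_one hv_sat] at hheavy
  omega

lemma exists_triangle_of_saturated (hv : v ∈ S) (hsat : C.Saturated S l v) :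
    ∃ y ∈ S, ∃ z ∈ S, (C.graph j).Adj v y ∧ (C.graph j).Adj v z ∧ (C.graph j).Adj y z := by
  have hsum := P.sum_outer_eq_of_saturated hij hS hi hj hheavy hv hsat
  obtain ⟨w, hw, -⟩ := exists_ne_zero_of_sum_ne_zero (by rw [hsum.1]; omega)
  obtain ⟨hwS, hvw⟩ := mem_outer_bot.1 hw
  obtain ⟨p, Q, hQS, hQ, hvQ⟩ := hsat
  have hlp : 1 ≤ l p := by
    by_contra! hzero
    exact hvw.ne <| hS p ∅ (empty_subset S) (by simp [Nat.lt_one_iff.1 hzero]) v hv w hwS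
      (by simp) (by simp)
  obtain ⟨u, hu, huv⟩ := exists_mem_ne (by rw [hQ.2]; omega : 1 < #Q) v
  rcases P.color_eq_or_of_ne hv (hQS hu) huv.symm with hcol | hcol
  · obtain rfl : i = p := hcol.symm.trans (hQ.1 hvQ hu huv.symm).2
    exact (P.not_memCliqueOn_four hij hS hi hj hheavy hv ⟨Q, hQS, by rwa [hi] at hQ, hvQ⟩).elim
  · obtain rfl : j = p := hcol.symm.trans (hQ.1 hvQ hu huv.symm).2
    rw [hj] at hQ
    exact (memCliqueOn_three.1 ⟨Q, hQS, hQ, hvQ⟩).2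

lemma not_saturated_of_heavy (hv : v ∈ S) : ¬ C.Saturated S l v := by
  intro hv_sat
  obtain ⟨y, hy, z, hz, hvy, hvz, hyz⟩ :=
    P.exists_triangle_of_saturated hij hS hi hj hheavy hv hv_sat
  have hy_sat : C.Saturated S l y :=
    ⟨j, hj.symm ▸ memCliqueOn_three.2 ⟨hy, v, hv, z, hz, hvy.symm, hyz, hvz⟩⟩
  obtain ⟨q, hq, hqyz⟩ : ∃ q ∈ C.outer S ⊥ v j, q ∉ ({y, z} : Finset V) := by
    by_contra! hsub
    have hle : ∑ u ∈ C.outer S ⊥ v j, C.weight S l u ≤ 2 * 2 :=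
      (sum_le_card_nsmul _ _ 2 fun _ _ => C.weight_le_two).trans <| by
        rw [smul_eq_mul]
        have := (card_le_card hsub).trans card_le_two
        omega
    have := (P.sum_outer_eq_of_saturated hij hS hi hj hheavy hv hv_sat).2
    omega
  simp only [mem_insert, mem_singleton, not_or] at hqyz
  obtain ⟨hqS, hvq⟩ := mem_outer_bot.1 hq
  have hyq : (C.graph i).Adj y q := by
    refine ⟨Ne.symm hqyz.1, (P.color_eq_or_of_ne hy hqS (Ne.symm hqyz.1)).resolve_right ?_⟩
    exact fun hcol => hqyz.2 <| NearCliqueFreeOn.eq_of_common_neighbors (hj ▸ hS j) hqS hz hv hy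
      hvy hvq.symm ⟨hqyz.1, C.symm q y ▸ hcol⟩ hvz.symm hyz.symm
  have hq_sat := P.not_saturated_of_adj_of_saturated hij hS hi hj hheavy hy hy_sat hqS hyq
  have hten := P.sum_outer_eq_ten_of_adj hij hS hi hj hheavy hqS hq_sat hv hv_sat hvq.symm
  exact P.not_saturated_of_sum_outer_eq_ten hij hS hi hj hqS hten
    (mem_outer_bot.2 ⟨hy, hyq.symm⟩) hy_sat

/-- Parity: otherwise colour `i` is a 5-regular graph on 9 vertices. -/
lemma false_of_heavy : False := by
  have hsum : ∀ T ⊆ S, ∑ v ∈ T, C.weight S l v = #T * 2 := fun T hT =>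
    sum_const_nat fun v hv =>
      weight_eq_two (P.not_saturated_of_heavy hij hS hi hj hheavy (hT hv))
  have htotal : C.totalWeight S l = #S * 2 := hsum S Subset.rfl
  have hdegree : ∀ v ∈ S, #S = 9 ∧ #(C.outer S ⊥ v i) = 5 := fun v hv => by
    have h_i := P.sum_outer_le_ten hij hS hi hj hv
    have h_j := P.sum_outer_le_six hij hS hi hj hv
    have h := P.totalWeight_eq_add_outer hij (l := l) hv
    rw [hsum _ outer_subset] at h_i h_j
    rw [hsum _ outer_subset, hsum _ outer_subset,
      weight_eq_two (P.not_saturated_of_heavy hij hS hi hj hheavy hv)] at h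
    omega
  obtain ⟨v, hv⟩ : S.Nonempty := card_pos.1 (by omega)
  have hregular : ∀ v ∈ S, #{u ∈ S | (C.graph i).Adj v u} = 5 := fun v hv => by
    rw [← (hdegree v hv).2]
    congr 1
    ext u
    rw [mem_outer_bot, mem_filter]
  have heven := even_sum_card_filter_adj (C.graph i) S
  rw [sum_congr rfl hregular, sum_const, (hdegree v hv).1] at heven
  exact absurd heven (by decide)

end Heavy

lemma totalWeight_le_sixteen : C.totalWeight S l ≤ 16 := by
  by_contra! hheavy
  exact P.false_of_heavy hij hS hi hj hheavy

end LevelsThreeTwo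

lemma totalWeight_le_thirtyFour (hi : l i = 3) (hj : l j = 3) : C.totalWeight S l ≤ 34 := by
  rcases S.eq_empty_or_nonempty with rfl | ⟨v, hv⟩
  · simp [totalWeight]
  have hred_i := P.reduces_outer_left hS hv (b := 2) hi
  have hred_j := P.swap.reduces_outer_left hS hv (b := 2) hj
  have h_i := (sum_weight_le_totalWeight hred_i).trans <|
    (P.swap.mono outer_subset).totalWeight_le_sixteen hij.symm
      (fun p => (hred_i p).nearCliqueFreeOn) (pairLevel_right.trans hj) (pairLevel_left hij)
  have h_j := (sum_weight_le_totalWeight hred_j).trans <|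
    (P.mono outer_subset).totalWeight_le_sixteen hij
      (fun p => (hred_j p).nearCliqueFreeOn) (pairLevel_right.trans hi) (pairLevel_left hij.symm)
  have := C.weight_le_two (X := S) (l := l) (v := v)
  rw [P.totalWeight_eq_add_outer hij hv]
  omega

end TwoColored
end IsModularPartition
end GallaiColoring

section Transversal

variable {V : Type*}

lemma exists_transversal (S : Finset V) (R : Setoid V) :
    ∃ T ⊆ S, (∀ x ∈ T, ∀ y ∈ T, R x y → x = y) ∧
      ∀ f : V → ℕ, ∑ v ∈ S, f v = ∑ x ∈ T, ∑ v ∈ cell S R x, f v := by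
  obtain ⟨T, hTS, hinj, himage⟩ := exists_subset_injOn_image_eq_of_surjOn S
    (S.image (Quotient.mk R)) (by rw [coe_image]; exact Set.surjOn_image _ _)
  refine ⟨T, hTS, fun x hx y hy hxy => hinj hx hy (Quotient.sound hxy), fun f => ?_⟩
  rw [← sum_fiberwise_of_maps_to (fun v hv => mem_image_of_mem (Quotient.mk R) hv), ← himage,
    sum_image hinj]
  refine sum_congr rfl fun x _ => sum_congr (filter_congr fun v _ => ?_) fun _ _ => rfl
  exact Quotient.eq.trans ⟨R.symm', R.symm'⟩

end Transversal

namespace GallaiColoring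
namespace IsModularPartition

variable {V K : Type*} {C : GallaiColoring V K} {S T : Finset V} {i j : K} {R : Setoid V}
  {l : K → ℕ}

lemma restrict_transversal (P : C.IsModularPartition S i j R) (hTS : T ⊆ S)
    (hT : ∀ x ∈ T, ∀ y ∈ T, R x y → x = y) : C.IsModularPartition T i j ⊥ where
  color_eq_or u hu v hv huv := P.color_eq_or u (hTS hu) v (hTS hv) fun h => huv (hT u hu v hv h)
  color_congr := by
    rintro u - u' - v - rfl -
    rfl

lemma cell_eq_singleton_of_saturated (P : C.IsModularPartition S i j R) (hS : C.Admissible S l)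
    (hTS : T ⊆ S) (hT : ∀ x ∈ T, ∀ y ∈ T, R x y → x = y) {x : V} (hx : C.Saturated T l x) :
    cell S R x = {x} := by
  obtain ⟨p, Q, hQT, hQ, hxQ⟩ := hx
  have hxS := hTS (hQT hxQ)
  refine eq_singleton_iff_unique_mem.2 ⟨mem_cell_self hxS, fun w hw => ?_⟩
  have hwS : w ∈ S := cell_subset hw
  refine hS p (Q.erase x) ((erase_subset _ _).trans (hQT.trans hTS)) (hQ.erase_of_mem hxQ)
    w hwS x hxS (fun q hq => ?_) (fun q hq => ?_) <;> obtain ⟨hqx, hqQ⟩ := mem_erase.1 hq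
  · have hxq : ¬ R x q := fun h => hqx (hT x (hQT hxQ) q (hQT hqQ) h).symm
    exact P.adj_of_mem_cell_of_mem_outer hxS hw
      (mem_outer.2 ⟨hTS (hQT hqQ), hxq, (hQ.1 hxQ hqQ hqx.symm).2⟩)
  · exact hQ.1 hxQ hqQ hqx.symm

lemma exists_two_colored_of_cell_le (P : C.IsModularPartition S i j R) (hS : C.Admissible S l)
    {g : ℕ} (hg : 5 ≤ g) (hcell : ∀ v ∈ S, 5 * ∑ u ∈ cell S R v, C.weight S l u ≤ 2 * g) :
    ∃ T ⊆ S, C.IsModularPartition T i j ⊥ ∧ 5 * C.totalWeight S l ≤ g * C.totalWeight T l := by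
  obtain ⟨T, hTS, hT, hsum⟩ := exists_transversal S R
  refine ⟨T, hTS, P.restrict_transversal hTS hT, ?_⟩
  rw [totalWeight, hsum, totalWeight, mul_sum, mul_sum]
  refine sum_le_sum fun x hx => ?_
  by_cases hsat : C.Saturated T l x
  · rw [P.cell_eq_singleton_of_saturated hS hTS hT hsat, sum_singleton, weight_eq_one hsat,
      weight_eq_one (hsat.imp fun p hp => ((hS p).reduces hTS).memCliqueOn x hp)]
    omega
  · rw [weight_eq_two hsat, mul_comm g]
    exact hcell x (hTS hx)

end IsModularPartition
end GallaiColoring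

/-! ### Capacity -/

section Capacity

/-- Two fifths of `cap s r` bound the number of vertices that `s` colours of level two, `r` colours
of level three and any number of colours of level one can accommodate; the scaling makes the values
of `cap` integral. -/
def cap (s r : ℕ) : ℕ :=
  (if Even s then if Even r then 5 else 17 else if Even r then 10 else 40) *
    (5 ^ (s / 2) * 17 ^ (r / 2))

lemma five_le_cap (s r : ℕ) : 5 ≤ cap s r := by
  rw [cap]
  exact le_mul_of_le_of_one_le (by split_ifs <;> omega) (Nat.one_le_iff_ne_zero.2 (by positivity))

lemma cap_add_two_left (s r : ℕ) : cap (s + 2) r = 5 * cap s r := by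
  simp only [cap, Nat.even_add, even_two, iff_true, Nat.add_div_right _ two_pos, pow_succ]
  ring

lemma cap_add_two_right (s r : ℕ) : cap s (r + 2) = 17 * cap s r := by
  simp only [cap, Nat.even_add, even_two, iff_true, Nat.add_div_right _ two_pos, pow_succ]
  ring

lemma cap_even_even (a b : ℕ) : cap (2 * a) (2 * b) = 5 * (5 ^ a * 17 ^ b) := by
  simp [cap]

lemma cap_odd_even (a b : ℕ) : cap (2 * a + 1) (2 * b) = 10 * (5 ^ a * 17 ^ b) := by
  simp [cap, Nat.mul_add_div]

lemma cap_even_odd (a b : ℕ) : cap (2 * a) (2 * b + 1) = 17 * (5 ^ a * 17 ^ b) := by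
  simp [cap, Nat.mul_add_div]

lemma cap_odd_odd (a b : ℕ) : cap (2 * a + 1) (2 * b + 1) = 40 * (5 ^ a * 17 ^ b) := by
  simp [cap, Nat.mul_add_div]

lemma cap_table (s r : ℕ) : ∃ t,
    (cap s r = 5 * t ∧ cap (s + 1) r = 10 * t ∧ cap s (r + 1) = 17 * t ∧
        cap (s + 1) (r + 1) = 40 * t ∨
      cap s r = 10 * t ∧ cap (s + 1) r = 25 * t ∧ cap s (r + 1) = 40 * t ∧
        cap (s + 1) (r + 1) = 85 * t ∨
      cap s r = 17 * t ∧ cap (s + 1) r = 40 * t ∧ cap s (r + 1) = 85 * t ∧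
        cap (s + 1) (r + 1) = 170 * t ∨
      cap s r = 40 * t ∧ cap (s + 1) r = 85 * t ∧ cap s (r + 1) = 170 * t ∧
        cap (s + 1) (r + 1) = 425 * t) := by
  rcases Nat.even_or_odd' s with ⟨a, rfl | rfl⟩ <;>
    rcases Nat.even_or_odd' r with ⟨b, rfl | rfl⟩ <;>
    refine ⟨5 ^ a * 17 ^ b, ?_⟩ <;>
    simp only [add_assoc, Nat.reduceAdd, cap_add_two_left, cap_add_two_right, cap_even_even,
      cap_odd_even, cap_even_odd, cap_odd_odd] <;> grind

end Capacity

namespace GallaiColoring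

variable {K : Type*} [Fintype K] {l : K → ℕ} {i j : K}

/-- The capacity of all the colours together, for given levels. -/
noncomputable def capacity (l : K → ℕ) : ℕ := cap #{p | l p = 2} #{p | l p = 3}

lemma five_le_capacity (l : K → ℕ) : 5 ≤ capacity l := five_le_cap _ _

/-- The capacity after the levels of `i` and `j` have been replaced by `a` and `b`. -/
noncomputable def pairCap (l : K → ℕ) (i j : K) (a b : ℕ) : ℕ := capacity (pairLevel l i j a b)

lemma pairCap_self (l : K → ℕ) (i j : K) : pairCap l i j (l i) (l j) = capacity l := by
  simp [pairCap, pairLevel]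

lemma pairCap_swap (hij : i ≠ j) (a b : ℕ) : pairCap l j i a b = pairCap l i j b a := by
  rw [pairCap, pairLevel, Function.update_comm hij.symm, pairCap, pairLevel]

lemma card_pairLevel_eq (hij : i ≠ j) (a b x : ℕ) : #{p | pairLevel l i j a b p = x} =
    #{p ∈ (univ.erase i).erase j | l p = x} + (if a = x then 1 else 0) +
      (if b = x then 1 else 0) := by
  rw [card_filter, card_filter, ← add_sum_erase univ _ (mem_univ i),
    ← add_sum_erase (univ.erase i) _ (mem_erase.2 ⟨hij.symm, mem_univ j⟩), pairLevel_left hij,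
    pairLevel_right, sum_congr rfl fun p hp => ?_]
  · ring
  · obtain ⟨hpj, hp⟩ := mem_erase.1 hp
    rw [pairLevel, Function.update_of_ne hpj, Function.update_of_ne (ne_of_mem_erase hp)]

lemma exists_pairCap_eq_cap (l : K → ℕ) (hij : i ≠ j) : ∃ s r, ∀ a b, pairCap l i j a b =
    cap (s + (if a = 2 then 1 else 0) + (if b = 2 then 1 else 0))
      (r + (if a = 3 then 1 else 0) + (if b = 3 then 1 else 0)) :=
  ⟨#{p ∈ (univ.erase i).erase j | l p = 2}, #{p ∈ (univ.erase i).erase j | l p = 3},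
    fun a b => by rw [pairCap, capacity, card_pairLevel_eq hij, card_pairLevel_eq hij]⟩

/-- The four cases are the parities of the numbers of other colours of levels two and three. -/
lemma pairCap_table (l : K → ℕ) (hij : i ≠ j) : ∃ t,
    (pairCap l i j 1 2 = pairCap l i j 2 1 ∧ pairCap l i j 1 3 = pairCap l i j 3 1 ∧
      pairCap l i j 2 3 = pairCap l i j 3 2) ∧
    (pairCap l i j 1 1 = 5 * t ∧ pairCap l i j 2 1 = 10 * t ∧ pairCap l i j 3 1 = 17 * t ∧
        pairCap l i j 2 2 = 25 * t ∧ pairCap l i j 3 2 = 40 * t ∧ pairCap l i j 3 3 = 85 * t ∨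
      pairCap l i j 1 1 = 10 * t ∧ pairCap l i j 2 1 = 25 * t ∧ pairCap l i j 3 1 = 40 * t ∧
        pairCap l i j 2 2 = 50 * t ∧ pairCap l i j 3 2 = 85 * t ∧ pairCap l i j 3 3 = 170 * t ∨
      pairCap l i j 1 1 = 17 * t ∧ pairCap l i j 2 1 = 40 * t ∧ pairCap l i j 3 1 = 85 * t ∧
        pairCap l i j 2 2 = 85 * t ∧ pairCap l i j 3 2 = 170 * t ∧ pairCap l i j 3 3 = 289 * t ∨
      pairCap l i j 1 1 = 40 * t ∧ pairCap l i j 2 1 = 85 * t ∧ pairCap l i j 3 1 = 170 * t ∧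
        pairCap l i j 2 2 = 200 * t ∧ pairCap l i j 3 2 = 425 * t ∧
        pairCap l i j 3 3 = 680 * t) := by
  obtain ⟨s, r, heval⟩ := exists_pairCap_eq_cap l hij
  obtain ⟨t, htable⟩ := cap_table s r
  refine ⟨t, by simp [heval], ?_⟩
  simp only [heval, Nat.reduceEqDiff, if_true, if_false, add_zero, add_assoc, Nat.reduceAdd,
    cap_add_two_left, cap_add_two_right]
  exact htable.imp (by omega) (Or.imp (by omega) (Or.imp (by omega) (by omega)))

end GallaiColoring

/-! ### The induction -/

namespace GallaiColoring

variable {V K : Type*} {C : GallaiColoring V K} {X S : Finset V} {i j : K} {R : Setoid V}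
  {l : K → ℕ} {u v : V}

/-- Otherwise the two ends of an edge in the class of `u` have a common neighbour in colour `j`. -/
lemma IsModularPartition.sdiff_cell_subset_outer (P : C.IsModularPartition X i j R)
    (hN : NearCliqueFreeOn (C.graph j) (C.outer X R v j) 1) (hv : v ∈ X)
    (hu : u ∈ C.outer X R v j) (hedge : ¬ (C.graph i).CliqueFreeOn (cell X R u : Set V) 2) :
    C.outer X R v j \ cell X R u ⊆ C.outer X R u i := by
  intro y hy
  obtain ⟨hyN, hyu⟩ := mem_sdiff.1 hy
  have huX := outer_subset hu
  have hyX := outer_subset hyN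
  have huy : ¬ R u y := fun h => hyu (mem_cell.2 ⟨hyX, h⟩)
  refine mem_outer.2 ⟨hyX, huy, (P.color_eq_or u huX y hyX huy).resolve_right fun hcol => ?_⟩
  obtain ⟨Q, hQ, hclique⟩ := exists_isNClique_of_not_cliqueFreeOn hedge
  obtain ⟨a, ha, b, hb, hab⟩ := one_lt_card.1 (by rw [hclique.2]; omega : 1 < #Q)
  have hadj : ∀ w ∈ Q, (C.graph j).Adj w y := fun w hw =>
    P.adj_of_mem_cell_of_mem_outer huX (hQ hw) (mem_outer.2 ⟨hyX, huy, hcol⟩)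
  have hQN := hQ.trans (P.cell_subset_outer hv hu)
  exact hab <| eq_of_adj_of_level_one hN hyN (hQN ha) (hQN hb) (hadj a ha) (hadj b hb)

variable [Fintype K]

/-- The data of an induction step: a modular partition of `X` whose classes are joined in the
colours `i` and `j`, together with the weight bound for all proper subsets of `X`. -/
structure InductionStep (C : GallaiColoring V K) (X : Finset V) (l : K → ℕ) (i j : K)
    (R : Setoid V) : Prop where
  ne : i ≠ j
  partition : C.IsModularPartition X i j R
  levels : ∀ p, 1 ≤ l p ∧ l p ≤ 3
  admissible : C.Admissible X l
  ih : ∀ Y ⊂ X, ∀ l' : K → ℕ, (∀ p, 1 ≤ l' p ∧ l' p ≤ 3) → C.Admissible Y l' →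
    5 * C.totalWeight Y l' ≤ 2 * capacity l'

namespace InductionStep

variable (H : C.InductionStep X l i j R)
include H

lemma swap : C.InductionStep X l j i R :=
  ⟨H.ne.symm, H.partition.swap, H.levels, H.admissible, H.ih⟩

lemma levels_pairLevel {a b : ℕ} (ha : 1 ≤ a ∧ a ≤ 3) (hb : 1 ≤ b ∧ b ≤ 3) (p : K) :
    1 ≤ pairLevel l i j a b p ∧ pairLevel l i j a b p ≤ 3 := by
  by_cases hpj : p = j
  · rwa [hpj, pairLevel_right]
  by_cases hpi : p = i
  · rwa [hpi, pairLevel_left H.ne]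
  · simpa [pairLevel, hpi, hpj] using H.levels p

lemma sum_weight_le (hS : S ⊂ X) {a b : ℕ} (ha : 1 ≤ a ∧ a ≤ 3) (hb : 1 ≤ b ∧ b ≤ 3)
    (hi : Reduces (C.graph i) X (l i) S a) (hj : Reduces (C.graph j) X (l j) S b) :
    5 * ∑ v ∈ S, C.weight X l v ≤ 2 * pairCap l i j a b := by
  have hred := reduces_pairLevel H.admissible hS.subset hi hj
  exact (Nat.mul_le_mul_left 5 (sum_weight_le_totalWeight hred)).trans <|
    H.ih S hS _ (H.levels_pairLevel ha hb) fun p => (hred p).nearCliqueFreeOn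

section OneColor

variable (hv : v ∈ X) (hne : (C.outer X R v i).Nonempty) (hempty : C.outer X R v j = ∅)
include hv hne hempty

lemma totalWeight_le_of_outer_eq_empty_of_two (hi : l i = 2) :
    5 * C.totalWeight X l ≤ 2 * capacity l := by
  have hcell := H.sum_weight_le (cell_ssubset hne) (by decide) (H.levels j)
    (H.partition.reduces_cell hv H.admissible hne (a := 1) hi)
    ((H.admissible j).reduces cell_subset)
  have houter := H.sum_weight_le (outer_ssubset hv) (by decide) (H.levels j)
    (H.partition.reduces_outer_of_one_add hv H.admissible (b := 1) hi)
    ((H.admissible j).reduces outer_subset)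
  rw [totalWeight, H.partition.sum_eq hv H.ne, hempty, sum_empty, ← pairCap_self l i j, hi]
  obtain ⟨t, hsymm, htable⟩ := pairCap_table l H.ne
  obtain hj | hj | hj : l j = 1 ∨ l j = 2 ∨ l j = 3 := by have := H.levels j; omega
  all_goals rw [hj] at hcell houter ⊢; omega

lemma totalWeight_le_of_outer_eq_empty_of_three (hi : l i = 3) :
    5 * C.totalWeight X l ≤ 2 * capacity l := by
  have hsum : 5 * C.totalWeight X l ≤ 2 * (pairCap l i j 2 (l j) + pairCap l i j 1 (l j)) := by
    rw [totalWeight, H.partition.sum_eq hv H.ne, hempty, sum_empty]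
    by_cases hfree : (C.graph i).CliqueFreeOn (cell X R v : Set V) 2
    · have hcell := H.sum_weight_le (cell_ssubset hne) (by decide) (H.levels j)
        (Reduces.of_cliqueFreeOn hfree) ((H.admissible j).reduces cell_subset)
      have houter := H.sum_weight_le (outer_ssubset hv) (by decide) (H.levels j)
        (H.partition.reduces_outer_of_one_add hv H.admissible (b := 2) hi)
        ((H.admissible j).reduces outer_subset)
      omega
    · have hcell := H.sum_weight_le (cell_ssubset hne) (by decide) (H.levels j)
        (H.partition.reduces_cell hv H.admissible hne (a := 2) hi)
        ((H.admissible j).reduces cell_subset)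
      have houter := H.sum_weight_le (outer_ssubset hv) (by decide) (H.levels j)
        (H.partition.reduces_outer hv H.admissible hfree (b := 1) hi)
        ((H.admissible j).reduces outer_subset)
      omega
  rw [← pairCap_self l i j, hi]
  obtain ⟨t, hsymm, htable⟩ := pairCap_table l H.ne
  obtain hj | hj | hj : l j = 1 ∨ l j = 2 ∨ l j = 3 := by have := H.levels j; omega
  all_goals rw [hj] at hsum ⊢; omega

lemma totalWeight_le_of_outer_eq_empty (hi : 2 ≤ l i) :
    5 * C.totalWeight X l ≤ 2 * capacity l := by
  obtain h | h : l i = 2 ∨ l i = 3 := by have := H.levels i; omega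
  · exact H.totalWeight_le_of_outer_eq_empty_of_two hv hne hempty h
  · exact H.totalWeight_le_of_outer_eq_empty_of_three hv hne hempty h

end OneColor

section Outer

variable (hv : v ∈ X) (hi : l i = 3) (hN : Reduces (C.graph j) X (l j) (C.outer X R v j) 1)
include hv hi hN

lemma sum_outer_le_of_cliqueFreeOn
    (hfree : ∀ u ∈ C.outer X R v j, (C.graph i).CliqueFreeOn (cell X R u : Set V) 2) :
    5 * ∑ u ∈ C.outer X R v j, C.weight X l u ≤ 6 * pairCap l i j 1 1 := by
  set N := C.outer X R v j
  set l' := pairLevel l i j 3 1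
  have hNX : N ⊂ X := outer_ssubset hv
  have hred : ∀ p, Reduces (C.graph p) X (l p) N (l' p) :=
    reduces_pairLevel H.admissible hNX.subset (hi ▸ (H.admissible i).reduces hNX.subset) hN
  have hadm : C.Admissible N l' := fun p => (hred p).nearCliqueFreeOn
  have hl'i : l' i = 3 := pairLevel_left H.ne
  have hl'j : l' j = 1 := pairLevel_right
  have hcell : ∀ u ∈ N, 5 * ∑ w ∈ cell N R u, C.weight N l' w ≤ 2 * pairCap l i j 1 1 :=
    fun u hu => by
      have hfree' : (C.graph i).CliqueFreeOn (cell N R u : Set V) 2 :=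
        CliqueFreeOn.subset _ (mod_cast filter_subset_filter _ hNX.subset) (hfree u hu)
      have hj : Reduces (C.graph j) N (l' j) (cell N R u) 1 :=
        hl'j ▸ (hadm j).reduces cell_subset
      have hredcell := reduces_pairLevel hadm cell_subset (Reduces.of_cliqueFreeOn hfree') hj
      rw [pairLevel_pairLevel H.ne] at hredcell
      exact (Nat.mul_le_mul_left 5 (sum_weight_le_totalWeight hredcell)).trans <|
        H.ih _ (cell_subset.trans_ssubset hNX) _ (H.levels_pairLevel (by decide) (by decide))
          fun p => (hredcell p).nearCliqueFreeOn
  obtain ⟨T, hTN, hT, hle⟩ := (H.partition.mono hNX.subset).exists_two_colored_of_cell_le hadm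
    (g := pairCap l i j 1 1) (five_le_capacity _) hcell
  have hsix : C.totalWeight T l' ≤ 6 := by
    simpa only [hl'i] using hT.totalWeight_le_of_level_one (hadm.mono hTN)
      (by omega) hl'j
  calc 5 * ∑ u ∈ N, C.weight X l u ≤ 5 * C.totalWeight N l' := by
        gcongr; exact sum_weight_le_totalWeight hred
    _ ≤ pairCap l i j 1 1 * 6 := hle.trans (by gcongr)
    _ = 6 * pairCap l i j 1 1 := mul_comm _ _

lemma sum_outer_le_of_not_cliqueFreeOn (hu : u ∈ C.outer X R v j)
    (hne : (C.outer X R u i).Nonempty)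
    (hedge : ¬ (C.graph i).CliqueFreeOn (cell X R u : Set V) 2) :
    5 * ∑ w ∈ C.outer X R v j, C.weight X l w ≤
      2 * (pairCap l i j 2 1 + pairCap l i j 1 1) := by
  have huX := outer_subset hu
  have hsub := H.partition.cell_subset_outer hv hu
  have hcell := H.sum_weight_le (cell_ssubset hne) (by decide) (by decide)
    (H.partition.reduces_cell huX H.admissible hne (a := 2) hi)
    (hN.trans (hN.nearCliqueFreeOn.reduces hsub))
  have hi_outer : Reduces (C.graph i) X (l i) (C.outer X R u i) 1 :=
    H.partition.reduces_outer huX H.admissible hedge hi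
  have hrest := H.sum_weight_le (sdiff_subset.trans_ssubset (outer_ssubset hv)) (by decide)
    (by decide) (hi_outer.trans (hi_outer.nearCliqueFreeOn.reduces
      (H.partition.sdiff_cell_subset_outer hN.nearCliqueFreeOn hv hu hedge)))
    (hN.trans (hN.nearCliqueFreeOn.reduces sdiff_subset))
  rw [← sum_sdiff hsub]
  omega

lemma sum_outer_le (hne : ∀ u ∈ X, (C.outer X R u i).Nonempty) :
    5 * ∑ u ∈ C.outer X R v j, C.weight X l u ≤ 2 * (pairCap l i j 2 1 + pairCap l i j 1 1) := by
  by_cases hfree : ∀ u ∈ C.outer X R v j, (C.graph i).CliqueFreeOn (cell X R u : Set V) 2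
  · have := H.sum_outer_le_of_cliqueFreeOn hv hi hN hfree
    obtain ⟨t, -, htable⟩ := pairCap_table l H.ne
    omega
  · push Not at hfree
    obtain ⟨u, hu, hedge⟩ := hfree
    exact H.sum_outer_le_of_not_cliqueFreeOn hv hi hN hu (hne u (outer_subset hu)) hedge

end Outer

section TwoColors

variable (hne_i : ∀ v ∈ X, (C.outer X R v i).Nonempty)
  (hne_j : ∀ v ∈ X, (C.outer X R v j).Nonempty)
include hne_i

lemma totalWeight_le_of_transversal
    (hcell_i : ∀ v ∈ X, Reduces (C.graph i) X (l i) (cell X R v) 1)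
    (hcell_j : ∀ v ∈ X, Reduces (C.graph j) X (l j) (cell X R v) 1) {M : ℕ}
    (hM : ∀ T ⊆ X, C.IsModularPartition T i j ⊥ → C.totalWeight T l ≤ M) :
    5 * C.totalWeight X l ≤ pairCap l i j 1 1 * M := by
  obtain ⟨T, hTX, hT, hle⟩ := H.partition.exists_two_colored_of_cell_le H.admissible
    (five_le_capacity _) fun v hv => H.sum_weight_le (cell_ssubset (hne_i v hv)) (by decide)
      (by decide) (hcell_i v hv) (hcell_j v hv)
  exact hle.trans (Nat.mul_le_mul_left _ (hM T hTX hT))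

include hne_j

lemma totalWeight_le_of_two_two (hi : l i = 2) (hj : l j = 2) :
    5 * C.totalWeight X l ≤ 2 * capacity l := by
  have := H.totalWeight_le_of_transversal hne_i
    (fun v hv => H.partition.reduces_cell hv H.admissible (hne_i v hv) hi)
    (fun v hv => H.partition.reduces_cell hv H.admissible (hne_j v hv) hj)
    (fun T hT P => P.totalWeight_le_ten H.ne (H.admissible.mono hT) hi hj)
  rw [← pairCap_self l i j, hi, hj]
  obtain ⟨t, -, htable⟩ := pairCap_table l H.ne
  omega

lemma totalWeight_le_of_three_two (hi : l i = 3) (hj : l j = 2) :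
    5 * C.totalWeight X l ≤ 2 * capacity l := by
  have hcell_j := fun v hv =>
    H.partition.reduces_cell (v := v) hv H.admissible (hne_j v hv) (a := 1) hj
  rw [← pairCap_self l i j, hi, hj]
  obtain ⟨t, hsymm, htable⟩ := pairCap_table l H.ne
  by_cases hfree : ∀ v ∈ X, (C.graph i).CliqueFreeOn (cell X R v : Set V) 2
  · have := H.totalWeight_le_of_transversal hne_i
      (fun v hv => Reduces.of_cliqueFreeOn (hfree v hv)) hcell_j
      (fun T hT P => P.totalWeight_le_sixteen H.ne (H.admissible.mono hT) hi hj)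
    omega
  · push Not at hfree
    obtain ⟨v, hv, hedge⟩ := hfree
    have hcell := H.sum_weight_le (cell_ssubset (hne_i v hv)) (by decide) (by decide)
      (H.partition.reduces_cell hv H.admissible (hne_i v hv) (a := 2) hi) (hcell_j v hv)
    have houter_i := H.sum_weight_le (outer_ssubset hv) (by decide) (H.levels j)
      (H.partition.reduces_outer hv H.admissible hedge (b := 1) hi)
      ((H.admissible j).reduces outer_subset)
    have houter_j := H.sum_outer_le hv hi
      (H.partition.reduces_outer_of_one_add hv H.admissible hj) hne_i
    rw [hj] at houter_i
    rw [totalWeight, H.partition.sum_eq hv H.ne]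
    omega

lemma totalWeight_le_of_three_three_of_edge (hi : l i = 3) (hj : l j = 3) (hv : v ∈ X)
    (hedge : ¬ (C.graph i).CliqueFreeOn (cell X R v : Set V) 2) :
    5 * C.totalWeight X l ≤ 2 * capacity l := by
  have hcell_i := H.partition.reduces_cell hv H.admissible (hne_i v hv) (a := 2) hi
  have houter_i := H.swap.sum_outer_le hv hj
    (H.partition.reduces_outer hv H.admissible hedge hi) hne_j
  rw [pairCap_swap H.ne, pairCap_swap H.ne] at houter_i
  rw [← pairCap_self l i j, hi, hj, totalWeight, H.partition.sum_eq hv H.ne]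
  obtain ⟨t, hsymm, htable⟩ := pairCap_table l H.ne
  by_cases hfree : (C.graph j).CliqueFreeOn (cell X R v : Set V) 2
  · have hcell := H.sum_weight_le (cell_ssubset (hne_i v hv)) (by decide) (by decide) hcell_i
      (Reduces.of_cliqueFreeOn hfree)
    have houter_j := H.sum_weight_le (outer_ssubset hv) (H.levels i) (by decide)
      ((H.admissible i).reduces outer_subset)
      (H.partition.reduces_outer_of_one_add hv H.admissible (b := 2) hj)
    rw [hi] at houter_j
    omega
  · have hcell := H.sum_weight_le (cell_ssubset (hne_i v hv)) (by decide) (by decide) hcell_i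
      (H.partition.reduces_cell hv H.admissible (hne_j v hv) (a := 2) hj)
    have houter_j := H.sum_outer_le hv hi
      (H.partition.reduces_outer hv H.admissible hfree hj) hne_i
    omega

lemma totalWeight_le_of_three_three (hi : l i = 3) (hj : l j = 3) :
    5 * C.totalWeight X l ≤ 2 * capacity l := by
  by_cases hfree_i : ∀ v ∈ X, (C.graph i).CliqueFreeOn (cell X R v : Set V) 2
  · by_cases hfree_j : ∀ v ∈ X, (C.graph j).CliqueFreeOn (cell X R v : Set V) 2
    · have := H.totalWeight_le_of_transversal hne_i
        (fun v hv => Reduces.of_cliqueFreeOn (hfree_i v hv))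
        (fun v hv => Reduces.of_cliqueFreeOn (hfree_j v hv))
        (fun T hT P => P.totalWeight_le_thirtyFour H.ne (H.admissible.mono hT) hi hj)
      rw [← pairCap_self l i j, hi, hj]
      obtain ⟨t, -, htable⟩ := pairCap_table l H.ne
      omega
    · push Not at hfree_j
      obtain ⟨v, hv, hedge⟩ := hfree_j
      exact H.swap.totalWeight_le_of_three_three_of_edge hne_j hne_i hj hi hv hedge
  · push Not at hfree_i
    obtain ⟨v, hv, hedge⟩ := hfree_i
    exact H.totalWeight_le_of_three_three_of_edge hne_i hne_j hi hj hv hedge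

lemma totalWeight_le_of_two_colors (hi : 2 ≤ l i) (hj : 2 ≤ l j) :
    5 * C.totalWeight X l ≤ 2 * capacity l := by
  obtain hi' | hi' : l i = 2 ∨ l i = 3 := by have := H.levels i; omega
  all_goals obtain hj' | hj' : l j = 2 ∨ l j = 3 := by have := H.levels j; omega
  · exact H.totalWeight_le_of_two_two hne_i hne_j hi' hj'
  · exact H.swap.totalWeight_le_of_three_two hne_j hne_i hj' hi'
  · exact H.totalWeight_le_of_three_two hne_i hne_j hi' hj'
  · exact H.totalWeight_le_of_three_three hne_i hne_j hi' hj'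

end TwoColors

lemma totalWeight_le (hlevel : ∀ u ∈ X, ∀ v ∈ X, u ≠ v → 2 ≤ l (C u v))
    (hR : ∃ u ∈ X, ∃ v ∈ X, ¬ R u v) : 5 * C.totalWeight X l ≤ 2 * capacity l := by
  obtain ⟨u, hu, v, hv, huv⟩ := hR
  have htwo : ∀ p, ∀ w ∈ X, (C.outer X R w p).Nonempty → 2 ≤ l p := fun p w hw ⟨z, hz⟩ => by
    obtain ⟨hzX, hwz, rfl⟩ := mem_outer.1 hz
    exact hlevel w hw z hzX fun h => hwz (h ▸ R.refl' w)
  have hnonempty : ∀ w ∈ X, C.outer X R w i = ∅ → (C.outer X R w j).Nonempty := fun w hw hi => by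
    obtain ⟨z, hz, hwz⟩ : ∃ z ∈ X, ¬ R w z := by
      by_contra! hall
      exact huv (R.trans' (R.symm' (hall u hu)) (hall v hv))
    rcases H.partition.color_eq_or w hw z hz hwz with h | h
    · exact absurd (mem_outer.2 ⟨hz, hwz, h⟩) (hi ▸ notMem_empty z)
    · exact ⟨z, mem_outer.2 ⟨hz, hwz, h⟩⟩
  by_cases hne_i : ∀ w ∈ X, (C.outer X R w i).Nonempty
  · by_cases hne_j : ∀ w ∈ X, (C.outer X R w j).Nonempty
    · exact H.totalWeight_le_of_two_colors hne_i hne_j (htwo i u hu (hne_i u hu))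
        (htwo j u hu (hne_j u hu))
    · push Not at hne_j
      obtain ⟨w, hw, hj⟩ := hne_j
      exact H.totalWeight_le_of_outer_eq_empty hw (hne_i w hw) hj (htwo i w hw (hne_i w hw))
  · push Not at hne_i
    obtain ⟨w, hw, hi⟩ := hne_i
    have hne_j := hnonempty w hw hi
    exact H.swap.totalWeight_le_of_outer_eq_empty hw hne_j hi (htwo j w hw hne_j)

end InductionStep

theorem totalWeight_le_capacity [Nontrivial K] (C : GallaiColoring V K) (X : Finset V)
    (l : K → ℕ) (hl : ∀ p, 1 ≤ l p ∧ l p ≤ 3) (hX : C.Admissible X l) :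
    5 * C.totalWeight X l ≤ 2 * capacity l := by
  induction X using Finset.strongInduction generalizing l with
  | H X ih =>
    rcases Nat.lt_or_ge #X 2 with hcard | hcard
    · have := C.totalWeight_le_two_mul_card (X := X) (l := l)
      have := five_le_capacity l
      omega
    by_cases hone : ∃ u ∈ X, ∃ v ∈ X, u ≠ v ∧ l (C u v) = 1
    · obtain ⟨u, hu, v, hv, huv, hone⟩ := hone
      exact (Nat.mul_le_mul_left 5 (totalWeight_le_erase hX hu hv huv hone)).trans <|
        ih _ (erase_ssubset hv) l hl (hX.mono (erase_subset _ _))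
    · push Not at hone
      obtain ⟨i, j, hij, R, P, hR⟩ := exists_isModularPartition C X hcard
      exact InductionStep.totalWeight_le ⟨hij, P, hl, hX, ih⟩
        (fun u hu v hv huv => (hl _).1.lt_of_ne (hone u hu v hv huv).symm) hR

end GallaiColoring

/-! ### Levels of the forbidden graphs -/

section ForbiddenGraphs

variable {V : Type*} {G : SimpleGraph V} {X : Finset V}

lemma nearCliqueFreeOn_one_of_free (h : GP3.Free G) : NearCliqueFreeOn G X 1 := by
  intro Q _ hQ u _ v _ hu hv
  obtain ⟨x, rfl⟩ := card_eq_one.1 hQ.2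
  by_contra huv
  simp only [mem_singleton, forall_eq] at hu hv
  refine h ⟨⟨⟨![u, x, v], fun {a b} hab => ?_⟩, fun a b hab => ?_⟩⟩
  · fin_cases a <;> fin_cases b <;> simp_all [GP3, G.adj_comm]
  · have := hu.ne
    have := hv.ne
    fin_cases a <;> fin_cases b <;> simp_all

lemma nearCliqueFreeOn_two_of_free (h : GK3.Free G) : NearCliqueFreeOn G X 2 :=
  have hfree : G.CliqueFree 3 :=
    by_contra fun hG => h ((not_cliqueFree_iff_top_isContained 3).1 hG)
  (Reduces.of_cliqueFreeOn (X := X) (m := 2) hfree.cliqueFreeOn).nearCliqueFreeOn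

lemma nearCliqueFreeOn_three_of_free (h : GH3.Free G) : NearCliqueFreeOn G X 3 := by
  intro Q _ hQ u _ v _ hu hv
  obtain ⟨x, y, z, hxy, hxz, hyz, rfl⟩ := is3Clique_iff.1 hQ
  by_contra huv
  simp only [mem_insert, mem_singleton, forall_eq_or_imp, forall_eq] at hu hv
  refine h ⟨⟨⟨![u, v, x, y, z], fun {a b} hab => ?_⟩, fun a b hab => ?_⟩⟩
  · fin_cases a <;> fin_cases b <;> simp_all [GH3, G.adj_comm]
  · have := And.intro hu.1.ne <| And.intro hu.2.1.ne hu.2.2.ne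
    have := And.intro hv.1.ne <| And.intro hv.2.1.ne hv.2.2.ne
    have := And.intro hxy.ne <| And.intro hxz.ne hyz.ne
    fin_cases a <;> fin_cases b <;> simp_all

end ForbiddenGraphs

section MixPKH

variable {k s r : ℕ} {i : Fin k}

lemma mixPKH_of_lt (h : i.val < r) : mixPKH k s r i = ⟨Fin 5, GH3⟩ := if_pos h

lemma mixPKH_of_le_of_lt (h : r ≤ i.val) (h' : i.val < r + s) :
    mixPKH k s r i = ⟨Fin 3, GK3⟩ := by
  simp [mixPKH, h.not_gt, h']

lemma mixPKH_of_add_le (h : r + s ≤ i.val) : mixPKH k s r i = ⟨Fin 3, GP3⟩ := by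
  simp [mixPKH, (Nat.le_of_add_right_le h).not_gt, h.not_gt]

end MixPKH

/-- The level of the colour `i` in `mixPKH k s r`: the number `m` for which the forbidden graph of
the colour bounds `m`-cliques as in `NearCliqueFreeOn`. -/
def level (k s r : ℕ) (i : Fin k) : ℕ :=
  if (i : ℕ) < r then 3 else if (i : ℕ) < r + s then 2 else 1

section Level

variable {k s r : ℕ}

lemma one_le_level_and_level_le_three (i : Fin k) : 1 ≤ level k s r i ∧ level k s r i ≤ 3 := by
  unfold level
  split_ifs <;> omega

lemma card_filter_le_val_lt (a b : ℕ) (hb : b ≤ k) :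
    #{i : Fin k | a ≤ i.val ∧ i.val < b} = b - a := by
  rw [← Nat.card_Ico, ← card_map Fin.valEmbedding]
  congr 1
  ext x
  simp only [mem_map, mem_filter, mem_univ, true_and, Fin.valEmbedding_apply, mem_Ico]
  exact ⟨fun ⟨_, hi, hix⟩ => hix ▸ hi, fun hx => ⟨⟨x, by omega⟩, hx, rfl⟩⟩

lemma capacity_level (h : s + r ≤ k) : GallaiColoring.capacity (level k s r) = cap s r := by
  have hlevel₂ : ∀ i : Fin k, level k s r i = 2 ↔ r ≤ i.val ∧ i.val < r + s := fun i => by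
    unfold level; split_ifs <;> omega
  have hlevel₃ : ∀ i : Fin k, level k s r i = 3 ↔ 0 ≤ i.val ∧ i.val < r := fun i => by
    unfold level; split_ifs <;> omega
  simp only [GallaiColoring.capacity, hlevel₂, hlevel₃]
  rw [card_filter_le_val_lt _ _ (by omega), card_filter_le_val_lt _ _ (by omega)]
  simp

end Level

namespace GallaiColoring

/-- A colouring in the sense of `IsGallaiColoring`, as a bundled colouring. -/
def ofIsGallaiColoring {n k : ℕ} {c : Fin n → Fin n → Fin k} (hc : IsGallaiColoring c) :
    GallaiColoring (Fin n) (Fin k) where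
  color := c
  symm := hc.1
  not_rainbow u v w huv huw hvw := by
    by_contra! h
    exact hc.2 ⟨u, v, w, huv, huw, hvw, h⟩

variable {n k s r : ℕ} {c : Fin n → Fin n → Fin k}

lemma free_of_not_hasMonoCopy (hc : IsGallaiColoring c) {W : Type} {F : SimpleGraph W} {i : Fin k}
    (h : ¬ HasMonoCopy F c i) : F.Free ((ofIsGallaiColoring hc).graph i) :=
  fun ⟨f⟩ => h ⟨f, f.injective, fun _ _ hab => (f.toHom.map_adj hab).2⟩

lemma admissible_level (hc : IsGallaiColoring c)
    (hfree : ∀ i, ¬ HasMonoCopy (mixPKH k s r i).2 c i) :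
    (ofIsGallaiColoring hc).Admissible univ (level k s r) := by
  intro i
  have h := free_of_not_hasMonoCopy hc (hfree i)
  unfold level
  split_ifs with hlt hlt'
  · rw [mixPKH_of_lt hlt] at h
    exact nearCliqueFreeOn_three_of_free h
  · rw [mixPKH_of_le_of_lt (not_lt.1 hlt) hlt'] at h
    exact nearCliqueFreeOn_two_of_free h
  · rw [mixPKH_of_add_le (not_lt.1 hlt')] at h
    exact nearCliqueFreeOn_one_of_free h

end GallaiColoring

theorem card_le_of_forall_not_hasMonoCopy {n k s r : ℕ} (hs : Odd s) (hr : Odd r)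
    (hsr : s + r < k) {c : Fin n → Fin n → Fin k} (hc : IsGallaiColoring c)
    (hfree : ∀ i, ¬ HasMonoCopy (mixPKH k s r i).2 c i) :
    n ≤ 16 * 5 ^ ((s - 1) / 2) * 17 ^ ((r - 1) / 2) := by
  obtain ⟨a, rfl⟩ := hs
  obtain ⟨b, rfl⟩ := hr
  have : Nontrivial (Fin k) := Fin.nontrivial_iff_two_le.2 (by omega)
  let C := GallaiColoring.ofIsGallaiColoring hc
  have hweight : n ≤ C.totalWeight univ (level k (2 * a + 1) (2 * b + 1)) := by
    simpa using GallaiColoring.card_le_totalWeight (C := C) (X := univ)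
  have hbound := C.totalWeight_le_capacity univ _ one_le_level_and_level_le_three
    (GallaiColoring.admissible_level hc hfree)
  rw [capacity_level hsr.le, cap_odd_odd] at hbound
  simp only [Nat.add_sub_cancel, Nat.mul_div_cancel_left _ two_pos, mul_assoc]
  omega

end UpperBound

/-! ### Lower bound -/

section LowerBound

section Graph

variable {V W : Type*} {G : SimpleGraph V} {H : SimpleGraph W} {n : ℕ}

lemma cliqueFree_of_hom (f : G →g H) (h : H.CliqueFree n) : G.CliqueFree n := by
  rw [cliqueFree_iff] at h ⊢
  exact ⟨fun e => h.false ((f.comp e.toHom).toCopy (Hom.injective_of_top_hom _))⟩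

lemma cliqueFree_three_of_forall (h : ∀ x y, G.Adj x y → ∀ z, G.Adj x z → ¬ G.Adj y z) :
    G.CliqueFree 3 := fun _ hQ => by
  classical
  obtain ⟨x, y, z, hxy, hxz, hyz, -⟩ := is3Clique_iff.1 hQ
  exact h x y hxy z hxz hyz

lemma cliqueFree_four_of_forall (h : ∀ x y, G.Adj x y → ∀ z, G.Adj x z → G.Adj y z →
    ∀ w, G.Adj x w → G.Adj y w → ¬ G.Adj z w) : G.CliqueFree 4 := by
  by_contra hG
  obtain ⟨f⟩ := (not_cliqueFree_iff_top_isContained 4).1 hG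
  have hadj : ∀ a b : Fin 4, a ≠ b → G.Adj (f a) (f b) := fun a b hab => f.toHom.map_adj hab
  exact h _ _ (hadj 0 1 (by decide)) _ (hadj 0 2 (by decide)) (hadj 1 2 (by decide)) _
    (hadj 0 3 (by decide)) (hadj 1 3 (by decide)) (hadj 2 3 (by decide))

lemma gh3_free_of_cliqueFree (h : G.CliqueFree 4) : GH3.Free G := fun ⟨f⟩ =>
  (not_cliqueFree_iff_top_isContained 4).2
    ⟨f.comp ⟨⟨Fin.succ, fun {a b} hab => by simpa [GH3] using hab⟩, Fin.succ_injective 4⟩⟩ h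

lemma gk3_free_of_cliqueFree (h : G.CliqueFree 3) : GK3.Free G := fun hG =>
  (not_cliqueFree_iff_top_isContained 3).2 hG h

lemma gp3_free_of_forall_eq (h : ∀ u v w, G.Adj u v → G.Adj w v → u = w) : GP3.Free G := by
  rintro ⟨f⟩
  exact absurd (f.injective (h (f 0) (f 1) (f 2) (f.toHom.map_adj (by simp [GP3]))
    (f.toHom.map_adj (by simp [GP3])))) (by decide)

end Graph

namespace GallaiColoring

variable {U V W K L : Type*}

open scoped Classical in
/-- The two-colouring in which `true` marks the edges of `G` and `false` the other edges. -/
noncomputable def ofGraph (G : SimpleGraph V) : GallaiColoring V Bool where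
  color u v := decide (G.Adj u v)
  symm u v := by simp only [G.adj_comm]
  not_rainbow _ _ _ _ _ _ := by grind

lemma graph_ofGraph_true (G : SimpleGraph V) : (ofGraph G).graph true = G := by
  ext u v
  simpa [graph_adj, ofGraph] using G.ne_of_adj

lemma graph_ofGraph_false (G : SimpleGraph V) : (ofGraph G).graph false = Gᶜ := by
  ext u v
  simp [graph_adj, ofGraph]

/-- The colouring obtained by restricting along `f` and renaming the colours along `g`. -/
def pullback (C : GallaiColoring V K) (f : W ↪ V) (g : K ↪ L) : GallaiColoring W L where
  color u v := g (C (f u) (f v))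
  symm u v := by rw [C.symm]
  not_rainbow u v w huv huw hvw := by
    simpa using C.not_rainbow (f.injective.ne huv) (f.injective.ne huw) (f.injective.ne hvw)

/-- The vertex map of a restriction, as a homomorphism between colour classes. -/
def pullbackHom (C : GallaiColoring V K) (f : W ↪ V) (g : K ↪ L) (p : K) :
    (C.pullback f g).graph (g p) →g C.graph p where
  toFun := f
  map_rel' h := ⟨f.injective.ne h.1, g.injective h.2⟩

open scoped Classical in
/-- The lexicographic product: every vertex of `U` is blown up to a copy of `V` coloured by `D`,
and distinct copies are joined as in `C`. -/
noncomputable def lexProd (C : GallaiColoring U K) (D : GallaiColoring V L) :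
    GallaiColoring (U × V) (K ⊕ L) where
  color x y := if x.1 = y.1 then .inr (D x.2 y.2) else .inl (C x.1 y.1)
  symm x y := by simp only [eq_comm, C.symm, D.symm]
  not_rainbow x y z hxy hxz hyz := by
    have hC := @C.not_rainbow x.1 y.1 z.1
    have hD := @D.not_rainbow x.2 y.2 z.2
    simp only [ne_eq, Prod.ext_iff] at hxy hxz hyz
    have := C.symm x.1 y.1
    have := C.symm x.1 z.1
    have := C.symm y.1 z.1
    grind (splits := 20)

lemma lexProd_adj_inl {C : GallaiColoring U K} {D : GallaiColoring V L} {x y : U × V} {p : K} :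
    ((C.lexProd D).graph (.inl p)).Adj x y ↔ (C.graph p).Adj x.1 y.1 := by
  simp only [graph_adj, lexProd]
  grind

lemma lexProd_adj_inr {C : GallaiColoring U K} {D : GallaiColoring V L} {x y : U × V} {q : L} :
    ((C.lexProd D).graph (.inr q)).Adj x y ↔ x.1 = y.1 ∧ (D.graph q).Adj x.2 y.2 := by
  simp only [graph_adj, lexProd]
  grind

lemma isGallaiColoring {n k : ℕ} (C : GallaiColoring (Fin n) (Fin k)) : IsGallaiColoring C :=
  ⟨C.symm, fun ⟨_, _, _, huv, huw, hvw, h₁, h₂, h₃⟩ => by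
    simpa [h₁, h₂, h₃] using C.not_rainbow huv huw hvw⟩

lemma not_hasMonoCopy_of_free {n k : ℕ} {C : GallaiColoring (Fin n) (Fin k)} {T : Type}
    {F : SimpleGraph T} {i : Fin k} (h : F.Free (C.graph i)) : ¬ HasMonoCopy F C i :=
  fun ⟨f, hf, hadj⟩ => h ⟨⟨⟨f, fun hab => ⟨hf.ne hab.ne, hadj _ _ hab⟩⟩, hf⟩⟩

end GallaiColoring

open GallaiColoring

/-- There is a Gallai colouring of the complete graph on `N` vertices in `r` colours without `K₄`
and `s` colours without `K₃`. -/
def HasRamseyColoring (r s N : ℕ) : Prop :=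
  ∃ C : GallaiColoring (Fin N) (Fin r ⊕ Fin s),
    ∀ p, (C.graph p).CliqueFree (p.elim (fun _ => 4) fun _ => 3)

namespace HasRamseyColoring

variable {r s r' s' N N' : ℕ}

lemma of_equiv {V K : Type*} [Fintype V] (C : GallaiColoring V K) (e : K ≃ Fin r ⊕ Fin s)
    (h : ∀ p, (C.graph p).CliqueFree ((e p).elim (fun _ => 4) fun _ => 3)) :
    HasRamseyColoring r s (Fintype.card V) := by
  refine ⟨C.pullback (Fintype.equivFin V).symm.toEmbedding e.toEmbedding, e.forall_congr_right.1 ?_⟩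
  exact fun p => cliqueFree_of_hom (C.pullbackHom _ _ p) (h p)

lemma mul (h : HasRamseyColoring r s N) (h' : HasRamseyColoring r' s' N') :
    HasRamseyColoring (r + r') (s + s') (N * N') := by
  obtain ⟨C, hC⟩ := h
  obtain ⟨D, hD⟩ := h'
  have hinl : ∀ p {n}, (C.graph p).CliqueFree n → ((C.lexProd D).graph (.inl p)).CliqueFree n :=
    fun p _ => cliqueFree_of_hom ⟨Prod.fst, lexProd_adj_inl.1⟩
  have hinr : ∀ q {n}, (D.graph q).CliqueFree n → ((C.lexProd D).graph (.inr q)).CliqueFree n :=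
    fun q _ => cliqueFree_of_hom ⟨Prod.snd, fun h => (lexProd_adj_inr.1 h).2⟩
  have := of_equiv (C.lexProd D)
    ((Equiv.sumSumSumComm _ _ _ _).trans (finSumFinEquiv.sumCongr finSumFinEquiv)) (by
      rintro ((p | p) | (p | p))
      exacts [hinl _ (hC (.inl p)), hinl _ (hC (.inr p)), hinr _ (hD (.inl p)),
        hinr _ (hD (.inr p))])
  simpa using this

lemma of_graph {V : Type*} [Fintype V] (G : SimpleGraph V) (e : Bool ≃ Fin r ⊕ Fin s)
    (h : G.CliqueFree ((e true).elim (fun _ => 4) fun _ => 3))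
    (h' : Gᶜ.CliqueFree ((e false).elim (fun _ => 4) fun _ => 3)) :
    HasRamseyColoring r s (Fintype.card V) :=
  of_equiv (ofGraph G) e <| Bool.forall_bool.2
    ⟨by rwa [graph_ofGraph_false], by rwa [graph_ofGraph_true]⟩

lemma zero_two_five : HasRamseyColoring 0 2 5 :=
  of_graph (cycleGraph 5) (finTwoEquiv.symm.trans (finSumFinEquiv (m := 0) (n := 2)).symm)
    (cliqueFree_three_of_forall (by decide +kernel))
    (cliqueFree_three_of_forall (by decide +kernel))

set_option synthInstance.maxSize 1000 in
lemma one_one_eight : HasRamseyColoring 1 1 8 :=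
  of_graph (circulantGraph {d : ZMod 8 | d = 1 ∨ d = 4})
    (finTwoEquiv.symm.trans (finSumFinEquiv (m := 1) (n := 1)).symm)
    (cliqueFree_three_of_forall (by decide +kernel))
    (cliqueFree_four_of_forall (by decide +kernel))

set_option synthInstance.maxSize 1000 in
lemma two_zero_seventeen : HasRamseyColoring 2 0 17 :=
  of_graph (circulantGraph {d : ZMod 17 | IsSquare d})
    (finTwoEquiv.symm.trans (finSumFinEquiv (m := 2) (n := 0)).symm)
    (cliqueFree_four_of_forall (by decide +kernel))
    (cliqueFree_four_of_forall (by decide +kernel))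

lemma of_odd (hs : Odd s) (hr : Odd r) :
    HasRamseyColoring r s (8 * 5 ^ ((s - 1) / 2) * 17 ^ ((r - 1) / 2)) := by
  obtain ⟨a, rfl⟩ := hs
  obtain ⟨b, rfl⟩ := hr
  simp only [add_tsub_cancel_right, mul_div_cancel_left₀ _ two_ne_zero]
  induction b with
  | zero =>
    induction a with
    | zero => exact one_one_eight
    | succ a ih => convert ih.mul zero_two_five using 1 <;> ring
  | succ b ih => convert ih.mul two_zero_seventeen using 1 <;> ring

end HasRamseyColoring

section Doubling

variable {k s r : ℕ}

/-- The colours of `mixPKH k s r` in order: the colours for `H₃`, those for `K₃`, and one of the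
colours for `P₃`. -/
def colorEmbedding (hsr : s + r < k) : (Fin r ⊕ Fin s) ⊕ Fin 1 ↪ Fin k :=
  ((finSumFinEquiv.sumCongr (.refl _)).trans finSumFinEquiv).toEmbedding.trans
    (Fin.castLEEmb (by omega))

lemma colorEmbedding_inl_lt (hsr : s + r < k) (p : Fin r ⊕ Fin s) :
    (colorEmbedding hsr (.inl p) : ℕ) < r + s :=
  (finSumFinEquiv p).isLt

/-- The colouring of `K₂` with a single colour. -/
def edgeColoring : GallaiColoring Bool (Fin 1) where
  color _ _ := 0
  symm _ _ := rfl
  not_rainbow _ _ _ _ _ _ := .inl rfl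

lemma adj_pullback_lexProd_edgeColoring {U W : Type*} {C : GallaiColoring U (Fin r ⊕ Fin s)}
    {f : W ↪ U × Bool} (hsr : s + r < k) {i : Fin k} (hi : r + s ≤ i) {x y : W}
    (h : (((C.lexProd edgeColoring).pullback f (colorEmbedding hsr)).graph i).Adj x y) :
    (f x).1 = (f y).1 ∧ (f x).2 ≠ (f y).2 := by
  by_cases hfst : (f x).1 = (f y).1
  · exact ⟨hfst, fun hsnd => h.ne (f.injective (Prod.ext hfst hsnd))⟩
  · have hcolor : (C.lexProd edgeColoring) (f x) (f y) = .inl (C (f x).1 (f y).1) := if_neg hfst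
    have hlt := colorEmbedding_inl_lt hsr (C (f x).1 (f y).1)
    rw [← hcolor, show colorEmbedding hsr _ = i from h.2] at hlt
    exact absurd hi hlt.not_ge

lemma HasRamseyColoring.exists_forall_not_hasMonoCopy {N n : ℕ} (h : HasRamseyColoring r s N)
    (hsr : s + r < k) (hn : n ≤ N * 2) : ∃ c : Fin n → Fin n → Fin k,
      IsGallaiColoring c ∧ ∀ i, ¬ HasMonoCopy (mixPKH k s r i).2 c i := by
  obtain ⟨C, hC⟩ := h
  obtain ⟨f⟩ : Nonempty (Fin n ↪ Fin N × Bool) :=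
    Function.Embedding.nonempty_of_card_le (by simpa using hn)
  let D := (C.lexProd edgeColoring).pullback f (colorEmbedding hsr)
  have hD : ∀ p, (D.graph (colorEmbedding hsr (.inl p))).CliqueFree
      (p.elim (fun _ => 4) fun _ => 3) := fun p =>
    cliqueFree_of_hom ((⟨Prod.fst, lexProd_adj_inl.1⟩ : _ →g C.graph p).comp (pullbackHom _ f _ _))
      (hC p)
  refine ⟨D, D.isGallaiColoring, fun i => not_hasMonoCopy_of_free ?_⟩
  rcases lt_or_ge (i : ℕ) r with hlt | hle
  · rw [mixPKH_of_lt hlt]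
    exact gh3_free_of_cliqueFree (hD (.inl ⟨i, hlt⟩))
  rcases lt_or_ge (i : ℕ) (r + s) with hlt | hle'
  · rw [mixPKH_of_le_of_lt hle hlt]
    have hi : i = colorEmbedding hsr (.inl (.inr ⟨i - r, by omega⟩)) := by
      ext; simp [colorEmbedding]; omega
    exact hi ▸ gk3_free_of_cliqueFree (hD (.inr ⟨i - r, by omega⟩))
  · rw [mixPKH_of_add_le hle']
    refine gp3_free_of_forall_eq fun u v w huv hwv => f.injective ?_
    have hu := adj_pullback_lexProd_edgeColoring hsr hle' huv
    have hw := adj_pullback_lexProd_edgeColoring hsr hle' hwv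
    refine Prod.ext (hu.1.trans hw.1.symm) ?_
    cases hfv : (f v).2 <;> simp_all

end Doubling

end LowerBound

end GallaiRamsey

/-- Theorem 1.5, case (b₆): s, r both odd and s + r < k implies
GR_k((k-s-r)P₃, sK₃, rH₃) = 16·5^((s-1)/2)·17^((r-1)/2) + 1. -/
theorem GR_mixPKH_b6 (k s r : ℕ) (hk : 1 ≤ k) (hs : Odd s) (hr : Odd r)
    (hsr : s + r < k) :
    GR k (mixPKH k s r) = 16 * 5 ^ ((s - 1) / 2) * 17 ^ ((r - 1) / 2) + 1 := by
  refine IsLeast.csInf_eq ⟨fun c hc => ?_, fun n hn => ?_⟩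
  · by_contra! hfree
    have hcard := GallaiRamsey.card_le_of_forall_not_hasMonoCopy hs hr hsr hc hfree
    omega
  · by_contra! hlt
    have hramsey := GallaiRamsey.HasRamseyColoring.of_odd hs hr
    obtain ⟨c, hc, hfree⟩ := hramsey.exists_forall_not_hasMonoCopy hsr (n := n) (by linarith)
    obtain ⟨i, hi⟩ := hn c hc
    exact hfree i hi
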